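/- Let Y be a boundary reduced tiled surface and let C be a non-backtracking cycle in Y^(1). Then: (1) there is a shortest representative cycle in Y^(1) for the free homotopy class of C in Y; (2) if C is a shortest representative of its free homotopy class in Y, then C and C* do not contain any long block or long chain. -/

import Mathlib

/-!
Formalization preamble for "Core Surfaces" (Magee–Puder).

We work with a fixed combinatorial (CW) model.  The surface `Σ_g` has one vertex,
`2g` directed labeled edges (the label `2i` plays the role of `a_{i+1}` and `2i+1`
the role of `b_{i+1}`), and one `4g`-gon glued along `[a₁,b₁]⋯[a_g,b_g]`.

* `Gamma g` is the surface group, presented by the single relator.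
* A `Complex g` is a combinatorial 2-complex with directed, labeled edges and
  2-cells given by their boundary walks; coverings of `Σ_g` are the complexes in
  which every vertex has exactly one incoming/outgoing edge of each label, every
  walk reading the relator is closed, and every closed walk reading the relator
  bounds exactly one face (`IsCovering`).  A tiled surface is a complex that
  embeds into such a covering (`IsTiledSurface`).
* Blocks, chains, boundary cycles (via the ribbon structure coming from the fixed
  cyclic order of the `4g` half-edges around a vertex of `Σ_g`), boundary-reduced
  and strongly boundary-reduced surfaces are defined combinatorially.
* Homotopy of edge-walks is the edge-path-group homotopy: backtrack insertions and
  insertions of boundaries of (present) faces.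
* `cover g J` is the covering space `J\~Σ_g` of `Σ_g` associated to a subgroup
  `J ≤ Γ_g` (vertices = right cosets), and `coreSub g J` is the core surface of
  `J`, defined exactly as in the paper: the union of all shortest representative
  cycles of essential free-homotopy classes, together with all components of the
  complement containing finitely many `4g`-gons.
-/

noncomputable section

namespace CS

/-- Signed letters over the generators `a₁,b₁,…,a_g,b_g` of `Γ_g`
(`a_{i+1} ↦ 2i`, `b_{i+1} ↦ 2i+1`); `true` means a positive letter. -/
abbrev Letter (g : ℕ) := Fin (2 * g) × Bool

/-- The label of the `p`-th letter of the relator `[a₁,b₁][a₂,b₂]⋯[a_g,b_g]`. -/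
def relLabel (g : ℕ) (p : Fin (4 * g)) : Fin (2 * g) :=
  ⟨2 * ((p : ℕ) / 4) + ((p : ℕ) % 4) % 2, by have := p.2; omega⟩

/-- The sign of the `p`-th letter of the relator. -/
def relSign (g : ℕ) (p : Fin (4 * g)) : Bool := decide ((p : ℕ) % 4 < 2)

/-- The relator `[a₁,b₁][a₂,b₂]⋯[a_g,b_g]` as a word (list of signed letters). -/
def relatorWord (g : ℕ) : List (Letter g) :=
  (List.finRange (4 * g)).map fun p => (relLabel g p, relSign g p)

/-- The relator as an element of the free group on the `2g` generators. -/
def relatorF (g : ℕ) : FreeGroup (Fin (2 * g)) :=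
  ((relatorWord g).map fun l => if l.2 then FreeGroup.of l.1 else (FreeGroup.of l.1)⁻¹).prod

/-- The surface group `Γ_g = ⟨a₁,b₁,…,a_g,b_g ∣ [a₁,b₁]⋯[a_g,b_g]⟩`. -/
abbrev Gamma (g : ℕ) := PresentedGroup ({relatorF g} : Set (FreeGroup (Fin (2 * g))))

/-- The image of a signed letter in `Γ_g`. -/
def letterG {g : ℕ} (l : Letter g) : Gamma g :=
  if l.2 then PresentedGroup.of l.1 else (PresentedGroup.of l.1)⁻¹

/-- The image of a word in `Γ_g`. -/
def wordG {g : ℕ} (w : List (Letter g)) : Gamma g := (w.map letterG).prod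

/-- `ℓ(γ^{Γ_g})`: the minimal length of a word in the generators representing the
conjugacy class of `γ` in `Γ_g`. -/
def conjLen {g : ℕ} (γ : Gamma g) : ℕ :=
  sInf {n | ∃ w : List (Letter g), w.length = n ∧ ∃ x : Gamma g, x * wordG w * x⁻¹ = γ}

/-! ### Half-edge positions around a vertex of `Σ_g`

The `4g` half-edges around the vertex `o` of `Σ_g` come in the (clockwise) cyclic
order `a₁`-out, `b₁`-in, `a₁`-in, `b₁`-out, `a₂`-out, `b₂`-in, `a₂`-in, `b₂`-out, …
-/

/-- Position of the outgoing `ℓ`-labeled half-edge in the cyclic order. -/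
def posOut {g : ℕ} (ℓ : Fin (2 * g)) : ℕ :=
  if (ℓ : ℕ) % 2 = 0 then 2 * (ℓ : ℕ) else 2 * (ℓ : ℕ) + 1

/-- Position of the incoming `ℓ`-labeled half-edge in the cyclic order. -/
def posIn {g : ℕ} (ℓ : Fin (2 * g)) : ℕ :=
  if (ℓ : ℕ) % 2 = 0 then 2 * (ℓ : ℕ) + 2 else 2 * (ℓ : ℕ) - 1

/-- The position of the half-edge through which a traversal of a dart with signed
letter `s` *arrives* at its terminal vertex. -/
def posArr {g : ℕ} (s : Letter g) : ℕ := if s.2 then posIn s.1 else posOut s.1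

/-- The position of the half-edge through which a traversal of a dart with signed
letter `s` *leaves* its initial vertex. -/
def posLv {g : ℕ} (s : Letter g) : ℕ := if s.2 then posOut s.1 else posIn s.1

/-- The number of half-edges strictly between the arrival half-edge of `s` and the
departure half-edge of `t`, in the clockwise cyclic order of the `4g` half-edges
around a vertex. -/
def gapN {g : ℕ} (s t : Letter g) : ℕ := (posLv t + 4 * g - (posArr s + 1)) % (4 * g)

/-! ### Combinatorial complexes -/

/-- A combinatorial at-most-2-dimensional CW-complex with directed edges labeled by
the generators of `Γ_g`, and 2-cells recorded by their boundary walks (lists of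
darts, i.e. edges with a direction of traversal). -/
structure Complex (g : ℕ) where
  V : Type
  E : Type
  F : Type
  src : E → V
  dst : E → V
  lab : E → Fin (2 * g)
  bdry : F → List (E × Bool)

namespace Complex

variable {g : ℕ} (Y : Complex g)

/-- Darts: edges together with a direction of traversal (`true` = forward). -/
abbrev D := Y.E × Bool

/-- The initial vertex of a dart. -/
def dTail (d : Y.D) : Y.V := if d.2 then Y.src d.1 else Y.dst d.1

/-- The terminal vertex of a dart. -/
def dHead (d : Y.D) : Y.V := if d.2 then Y.dst d.1 else Y.src d.1

/-- The reversal of a dart. -/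
def dRev (d : Y.D) : Y.D := (d.1, !d.2)

/-- The signed letter read by a dart. -/
def dLet (d : Y.D) : Letter g := (Y.lab d.1, d.2)

/-- The word read along a list of darts. -/
def wordOf (l : List Y.D) : List (Letter g) := l.map Y.dLet

/-- The reversed walk. -/
def revW (l : List Y.D) : List Y.D := (l.map Y.dRev).reverse

/-- `WalkFrom u v l` : `l` is a walk (edge-path) from `u` to `v`. -/
inductive WalkFrom : Y.V → Y.V → List Y.D → Prop
  | nil (v : Y.V) : WalkFrom v v []
  | cons (d : Y.D) {v : Y.V} {l : List Y.D} :
      WalkFrom (Y.dHead d) v l → WalkFrom (Y.dTail d) v (d :: l)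

/-- All darts of `l` use edges from the set `sE`. -/
def InSet (sE : Set Y.E) (l : List Y.D) : Prop := ∀ d ∈ l, d.1 ∈ sE

/-- Two darts are adjacent (can be traversed consecutively). -/
def adj (d d' : Y.D) : Prop := Y.dHead d = Y.dTail d'

/-- A nonempty closed walk. -/
def IsCycle (c : List Y.D) : Prop := c ≠ [] ∧ ∃ v, Y.WalkFrom v v c

/-- **P1**: at most one incoming and at most one outgoing `ℓ`-labeled edge at every
vertex, for every label `ℓ`. -/
def P1 : Prop :=
  (∀ e e' : Y.E, Y.src e = Y.src e' → Y.lab e = Y.lab e' → e = e') ∧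
  (∀ e e' : Y.E, Y.dst e = Y.dst e' → Y.lab e = Y.lab e' → e = e')

/-- **P2**: every walk reading a word equal to `1` in `Γ_g` is closed. -/
def P2 : Prop :=
  ∀ (u v : Y.V) (l : List Y.D), Y.WalkFrom u v l → wordG (Y.wordOf l) = 1 → u = v

/-- **P3**: every 2-cell is glued along a closed walk reading the relator
`[a₁,b₁]⋯[a_g,b_g]`, and every such closed walk bounds at most one 2-cell. -/
def P3 : Prop :=
  (∀ f : Y.F, (∃ v, Y.WalkFrom v v (Y.bdry f)) ∧ Y.wordOf (Y.bdry f) = relatorWord g) ∧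
  Function.Injective Y.bdry

/-- A combinatorial covering space of `Σ_g`: every vertex has exactly one outgoing
and one incoming edge of each label, every walk reading the relator is closed, and
every closed walk reading the relator bounds exactly one `4g`-gon. -/
def IsCovering : Prop :=
  Y.P1 ∧ Y.P3 ∧
  (∀ (v : Y.V) (ℓ : Fin (2 * g)), ∃ e, Y.src e = v ∧ Y.lab e = ℓ) ∧
  (∀ (v : Y.V) (ℓ : Fin (2 * g)), ∃ e, Y.dst e = v ∧ Y.lab e = ℓ) ∧
  (∀ (u v : Y.V) (l : List Y.D), Y.WalkFrom u v l → Y.wordOf l = relatorWord g → u = v) ∧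
  (∀ (v : Y.V) (l : List Y.D), Y.WalkFrom v v l → Y.wordOf l = relatorWord g →
    ∃ f, Y.bdry f = l)

end Complex

/-- A morphism of labeled complexes: maps cells to cells of the same dimension and
respects sources, targets, labels and face boundaries (equivalently, commutes with
the immersions to `Σ_g`). -/
structure Hom {g : ℕ} (Y Z : Complex g) where
  mV : Y.V → Z.V
  mE : Y.E → Z.E
  mF : Y.F → Z.F
  hsrc : ∀ e, Z.src (mE e) = mV (Y.src e)
  hdst : ∀ e, Z.dst (mE e) = mV (Y.dst e)
  hlab : ∀ e, Z.lab (mE e) = Y.lab e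
  hbdry : ∀ f, Z.bdry (mF f) = (Y.bdry f).map fun d => (mE d.1, d.2)

namespace Hom

variable {g : ℕ} {Y Z : Complex g}

/-- The induced map on darts. -/
def mD (φ : Hom Y Z) (d : Y.D) : Z.D := (φ.mE d.1, d.2)

/-- Injectivity (an embedding of complexes). -/
def Inj (φ : Hom Y Z) : Prop :=
  Function.Injective φ.mV ∧ Function.Injective φ.mE ∧ Function.Injective φ.mF

end Hom

namespace Complex

variable {g : ℕ} (Y : Complex g)

/-- A tiled surface: a complex which embeds into a combinatorial covering space of
`Σ_g` (compatibly with directions and labels). -/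
def IsTiledSurface : Prop :=
  ∃ Z : Complex g, Z.IsCovering ∧ ∃ φ : Hom Y Z, φ.Inj

/-- Connectivity of a complex (any two vertices are joined by a walk). -/
def Connected : Prop := Nonempty Y.V ∧ ∀ v w : Y.V, ∃ l, Y.WalkFrom v w l

/-! ### Blocks and chains -/

/-- A block: a nonempty walk such that successive darts have no half-edges between
them (hence it reads a subword of the cyclic relator, of length at most `4g`). -/
def IsBlock (l : List Y.D) : Prop :=
  l ≠ [] ∧ l.length ≤ 4 * g ∧
  List.Chain' (fun d d' => Y.adj d d' ∧ gapN (Y.dLet d) (Y.dLet d') = 0) l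

/-- Two blocks are consecutive: concatenation is a walk and there is exactly one
half-edge between the last dart of the first and the first dart of the second. -/
def chainStep (b b' : List Y.D) : Prop :=
  ∃ d d', b.getLast? = some d ∧ b'.head? = some d' ∧ Y.adj d d' ∧
    gapN (Y.dLet d) (Y.dLet d') = 1

/-- A chain: a nonempty sequence of consecutive blocks. -/
def IsChain (bs : List (List Y.D)) : Prop :=
  bs ≠ [] ∧ (∀ b ∈ bs, Y.IsBlock b) ∧ List.Chain' Y.chainStep bs

/-- A cyclic chain: a chain whose blocks pave an entire cycle. -/
def IsCyclicChain (bs : List (List Y.D)) : Prop :=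
  Y.IsChain bs ∧ ∃ b b', bs.getLast? = some b ∧ bs.head? = some b' ∧ Y.chainStep b b'

/-- A long chain: a chain of consecutive blocks of lengths `2g, 2g−1, …, 2g−1, 2g`. -/
def IsLongChain (bs : List (List Y.D)) : Prop :=
  Y.IsChain bs ∧ ∃ k, bs.map List.length = 2 * g :: (List.replicate k (2 * g - 1) ++ [2 * g])

/-- A half-chain: a cyclic chain all of whose blocks have length `2g − 1`. -/
def IsHalfChain (bs : List (List Y.D)) : Prop :=
  Y.IsCyclicChain bs ∧ ∀ b ∈ bs, b.length = 2 * g - 1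

/-! ### Boundary cycles of the thick version (relative to sets of present edges and
faces), via the ribbon structure -/

/-- `nextD sE d d'`: among darts (with edge in `sE`) leaving the head of `d`, the
dart `d'` is the first one in clockwise order after the arrival half-edge of `d`.
This is the successor map whose orbits trace the boundary components of the thick
version of the ribbon graph. -/
def nextD (sE : Set Y.E) (d d' : Y.D) : Prop :=
  d'.1 ∈ sE ∧ Y.adj d d' ∧
  ∀ d'' : Y.D, d''.1 ∈ sE → Y.adj d d'' →
    gapN (Y.dLet d) (Y.dLet d') ≤ gapN (Y.dLet d) (Y.dLet d'')

/-- The corner between the consecutive darts `d, d'` is filled by a face from `sF`. -/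
def faceStep (sF : Set Y.F) (d d' : Y.D) : Prop :=
  ∃ f ∈ sF, [d, d'] <:+: (Y.bdry f ++ Y.bdry f)

/-- One step along the boundary of the thick version. -/
def bStep (sE : Set Y.E) (sF : Set Y.F) (d d' : Y.D) : Prop :=
  d.1 ∈ sE ∧ Y.nextD sE d d' ∧ ¬ Y.faceStep sF d d'

/-- A (finite segment of a) boundary cycle of the thick version. -/
def BPath (sE : Set Y.E) (sF : Set Y.F) (l : List Y.D) : Prop :=
  l ≠ [] ∧ Y.InSet sE l ∧ List.Chain' (Y.bStep sE sF) l

/-- A (finite) boundary cycle of the thick version. -/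
def BCycle (sE : Set Y.E) (sF : Set Y.F) (l : List Y.D) : Prop :=
  Y.BPath sE sF l ∧ ∃ d d', l.getLast? = some d ∧ l.head? = some d' ∧ Y.bStep sE sF d d'

/-- A dart lying on the boundary of the thick version. -/
def IsBDart (sE : Set Y.E) (sF : Set Y.F) (d : Y.D) : Prop :=
  d.1 ∈ sE ∧ ∃ d', Y.nextD sE d d' ∧ ¬ Y.faceStep sF d d'

/-- Boundary reduced: no boundary cycle contains a long block (length `≥ 2g+1`) or
a long chain. -/
def BoundaryReduced (sE : Set Y.E) (sF : Set Y.F) : Prop :=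
  (∀ l, Y.BPath sE sF l → ¬ (Y.IsBlock l ∧ 2 * g + 1 ≤ l.length)) ∧
  (∀ bs, Y.IsLongChain bs → ¬ Y.BPath sE sF bs.flatten)

/-- Strongly boundary reduced: no boundary cycle contains a half-block (length
exactly `2g`) or a half-chain. -/
def StronglyBoundaryReduced (sE : Set Y.E) (sF : Set Y.F) : Prop :=
  (∀ l, Y.BPath sE sF l → ¬ (Y.IsBlock l ∧ l.length = 2 * g)) ∧
  (∀ bs, Y.IsHalfChain bs → ¬ Y.BCycle sE sF bs.flatten)

/-! ### Combinatorial homotopy of walks -/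

/-- A closed walk traversing the boundary of a face from `sF` (in either direction,
starting anywhere). -/
def faceLoop (sF : Set Y.F) (b : List Y.D) : Prop :=
  ∃ f ∈ sF, ∃ n, b = (Y.bdry f).rotate n ∨ b = Y.revW ((Y.bdry f).rotate n)

/-- Elementary homotopy move: insertion of a backtrack or of a face boundary. -/
def elemMove (sE : Set Y.E) (sF : Set Y.F) (l l' : List Y.D) : Prop :=
  (∃ (l₁ l₂ : List Y.D) (d : Y.D), d.1 ∈ sE ∧ l = l₁ ++ l₂ ∧ l' = l₁ ++ d :: Y.dRev d :: l₂) ∨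
  (∃ l₁ l₂ b, Y.faceLoop sF b ∧ l = l₁ ++ l₂ ∧ l' = l₁ ++ b ++ l₂)

/-- Homotopy (rel endpoints) of walks from `u` to `v`, inside the subcomplex with
edge set `sE` and face set `sF`. -/
def Homotopic (sE : Set Y.E) (sF : Set Y.F) (u v : Y.V) (c c' : List Y.D) : Prop :=
  Relation.EqvGen
    (fun a b =>
      Y.WalkFrom u v a ∧ Y.WalkFrom u v b ∧ Y.InSet sE a ∧ Y.InSet sE b ∧
        (Y.elemMove sE sF a b ∨ Y.elemMove sE sF b a)) c c'

/-- A closed walk which is null-homotopic. -/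
def NullHomotopic (sE : Set Y.E) (sF : Set Y.F) (c : List Y.D) : Prop :=
  ∃ v, Y.WalkFrom v v c ∧ Y.Homotopic sE sF v v c []

/-- An essential cycle: a nonempty closed walk which is not null-homotopic. -/
def Essential (sE : Set Y.E) (sF : Set Y.F) (c : List Y.D) : Prop :=
  Y.IsCycle c ∧ Y.InSet sE c ∧ ¬ Y.NullHomotopic sE sF c

/-- Free homotopy of closed walks. -/
def FreelyHomotopic (sE : Set Y.E) (sF : Set Y.F) (c c' : List Y.D) : Prop :=
  ∃ u v q, Y.WalkFrom u u c ∧ Y.WalkFrom v v c' ∧ Y.WalkFrom u v q ∧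
    Y.InSet sE q ∧ Y.InSet sE c ∧ Y.InSet sE c' ∧
    Y.Homotopic sE sF u u c (q ++ c' ++ Y.revW q)

/-- `c` is a shortest representative of its free homotopy class. -/
def ShortestRep (sE : Set Y.E) (sF : Set Y.F) (c : List Y.D) : Prop :=
  ∀ c', Y.FreelyHomotopic sE sF c c' → c.length ≤ c'.length

end Complex

/-- `s` occurs as a contiguous subword of the cyclic word `c`. -/
def cycContains {α : Type*} (c s : List α) : Prop :=
  s ≠ [] ∧ s.length ≤ c.length ∧ s <:+: (c ++ c)

namespace Complex

variable {g : ℕ} (Y : Complex g)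

/-- The cycle `c` contains no long block and no long chain. -/
def NoLongBlockOrChainCyc (c : List Y.D) : Prop :=
  (∀ s, cycContains c s → ¬ (Y.IsBlock s ∧ 2 * g + 1 ≤ s.length)) ∧
  (∀ bs, Y.IsLongChain bs → ¬ cycContains c bs.flatten)

/-- A (cyclically) non-backtracking cycle. -/
def NonBacktrackingCyc (c : List Y.D) : Prop :=
  ¬ ∃ d : Y.D, cycContains c [d, Y.dRev d]

/-- A cycle which is essential and a shortest representative of its
free homotopy class. -/
def GoodCycle (c : List Y.D) : Prop :=
  Y.IsCycle c ∧ Y.Essential Set.univ Set.univ c ∧ Y.ShortestRep Set.univ Set.univ c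

/-! ### Cells and components of complements -/

/-- The cells of a complex. -/
def Cell := Y.V ⊕ Y.E ⊕ Y.F

def vCell (v : Y.V) : Y.Cell := Sum.inl v
def eCell (e : Y.E) : Y.Cell := Sum.inr (Sum.inl e)
def fCell (f : Y.F) : Y.Cell := Sum.inr (Sum.inr f)

/-- Basic incidence of (open) cells. -/
def inc0 : Y.Cell → Y.Cell → Prop := fun c c' =>
  match c, c' with
  | Sum.inl v, Sum.inr (Sum.inl e) => Y.src e = v ∨ Y.dst e = v
  | Sum.inl v, Sum.inr (Sum.inr f) => ∃ d ∈ Y.bdry f, Y.dTail d = v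
  | Sum.inr (Sum.inl e), Sum.inr (Sum.inr f) => ∃ b, (e, b) ∈ Y.bdry f
  | _, _ => False

/-- Symmetrized incidence of cells. -/
def incid (c c' : Y.Cell) : Prop := Y.inc0 c c' ∨ Y.inc0 c' c

end Complex

/-- A triple of subsets of the cells of a complex `Y` (a prospective subcomplex). -/
structure SubC {g : ℕ} (Y : Complex g) where
  sV : Set Y.V
  sE : Set Y.E
  sF : Set Y.F

namespace SubC

variable {g : ℕ} {Y : Complex g}

/-- `S` is an actual subcomplex: closed under taking boundaries of cells. -/
def IsSub (S : SubC Y) : Prop :=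
  (∀ e ∈ S.sE, Y.src e ∈ S.sV ∧ Y.dst e ∈ S.sV) ∧
  (∀ f ∈ S.sF, ∀ d ∈ Y.bdry f, d.1 ∈ S.sE)

/-- Containment of subcomplexes. -/
def le (S T : SubC Y) : Prop := S.sV ⊆ T.sV ∧ S.sE ⊆ T.sE ∧ S.sF ⊆ T.sF

/-- Compactness: finitely many cells. -/
def Compact (S : SubC Y) : Prop := S.sV.Finite ∧ S.sE.Finite ∧ S.sF.Finite

/-- Connectivity of the subcomplex. -/
def Connected (S : SubC Y) : Prop :=
  S.sV.Nonempty ∧ ∀ v ∈ S.sV, ∀ w ∈ S.sV, ∃ l, Y.WalkFrom v w l ∧ Y.InSet S.sE l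

/-- Image of a subcomplex under a morphism. -/
def image {Z : Complex g} (φ : Hom Y Z) (S : SubC Y) : SubC Z :=
  ⟨φ.mV '' S.sV, φ.mE '' S.sE, φ.mF '' S.sF⟩

end SubC

/-- The whole complex, as a subcomplex of itself. -/
def fullSub {g : ℕ} (Y : Complex g) : SubC Y := ⟨Set.univ, Set.univ, Set.univ⟩

namespace Complex

variable {g : ℕ} (Y : Complex g)

/-- Membership of a cell in a subcomplex. -/
def inSub (S : SubC Y) : Y.Cell → Prop := fun c =>
  match c with
  | Sum.inl v => v ∈ S.sV
  | Sum.inr (Sum.inl e) => e ∈ S.sE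
  | Sum.inr (Sum.inr f) => f ∈ S.sF

/-- Reachability of cells through the open complement of the subcomplex `S`
(= lying in the same connected component of the complement). -/
def reachS (S : SubC Y) (c c' : Y.Cell) : Prop :=
  Relation.ReflTransGen (fun a b => Y.incid a b ∧ ¬ Y.inSub S a ∧ ¬ Y.inSub S b) c c'

end Complex

/-- The closure (as a subcomplex) of the connected component of the cell `c₀` in the
complement of the subcomplex `S`. -/
def compCl {g : ℕ} (Y : Complex g) (S : SubC Y) (c₀ : Y.Cell) : SubC Y :=
  let cF : Set Y.F := {f | Y.reachS S c₀ (Y.fCell f)}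
  let cE : Set Y.E :=
    {e | Y.reachS S c₀ (Y.eCell e)} ∪ {e | ∃ f ∈ cF, ∃ b, (e, b) ∈ Y.bdry f}
  let cV : Set Y.V :=
    {v | Y.reachS S c₀ (Y.vCell v)} ∪ {v | ∃ e ∈ cE, Y.src e = v ∨ Y.dst e = v}
  ⟨cV, cE, cF⟩

/-- The subcomplex has exactly one boundary cycle (which covers all boundary darts). -/
def OneBdry {g : ℕ} (Y : Complex g) (S : SubC Y) : Prop :=
  ∃ δ, Y.BCycle S.sE S.sF δ ∧ ∀ d, Y.IsBDart S.sE S.sF d → d ∈ δ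

/-- The subcomplex has exactly two (disjoint) boundary cycles, covering all
boundary darts. -/
def TwoBdry {g : ℕ} (Y : Complex g) (S : SubC Y) : Prop :=
  ∃ δ₁ δ₂, Y.BCycle S.sE S.sF δ₁ ∧ Y.BCycle S.sE S.sF δ₂ ∧ δ₁.Disjoint δ₂ ∧
    ∀ d, Y.IsBDart S.sE S.sF d → d ∈ δ₁ ∨ d ∈ δ₂

/-- The boundary-reduced closure of `S` inside `Y`: the intersection of all
intermediate boundary reduced subcomplexes. -/
def BRcl {g : ℕ} (Y : Complex g) (S : SubC Y) : SubC Y where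
  sV := ⋂ T ∈ {T : SubC Y | T.IsSub ∧ S.le T ∧ Y.BoundaryReduced T.sE T.sF}, T.sV
  sE := ⋂ T ∈ {T : SubC Y | T.IsSub ∧ S.le T ∧ Y.BoundaryReduced T.sE T.sF}, T.sE
  sF := ⋂ T ∈ {T : SubC Y | T.IsSub ∧ S.le T ∧ Y.BoundaryReduced T.sE T.sF}, T.sF

/-- The strongly-boundary-reduced closure of `S` inside `Y`. -/
def SBRcl {g : ℕ} (Y : Complex g) (S : SubC Y) : SubC Y where
  sV := ⋂ T ∈ {T : SubC Y | T.IsSub ∧ S.le T ∧ Y.StronglyBoundaryReduced T.sE T.sF}, T.sV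
  sE := ⋂ T ∈ {T : SubC Y | T.IsSub ∧ S.le T ∧ Y.StronglyBoundaryReduced T.sE T.sF}, T.sE
  sF := ⋂ T ∈ {T : SubC Y | T.IsSub ∧ S.le T ∧ Y.StronglyBoundaryReduced T.sE T.sF}, T.sF

/-- An isomorphism between the subcomplex `S` of `Y` and the subcomplex `T` of `Z`. -/
structure SubEquiv {g : ℕ} (Y : Complex g) (S : SubC Y) (Z : Complex g) (T : SubC Z) where
  fV : Y.V → Z.V
  fE : Y.E → Z.E
  fF : Y.F → Z.F
  bijV : Set.BijOn fV S.sV T.sV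
  bijE : Set.BijOn fE S.sE T.sE
  bijF : Set.BijOn fF S.sF T.sF
  hsrc : ∀ e ∈ S.sE, Z.src (fE e) = fV (Y.src e)
  hdst : ∀ e ∈ S.sE, Z.dst (fE e) = fV (Y.dst e)
  hlab : ∀ e ∈ S.sE, Z.lab (fE e) = Y.lab e
  hbdry : ∀ f ∈ S.sF, Z.bdry (fF f) = (Y.bdry f).map fun d => (fE d.1, d.2)

/-- `FunnelComponent Y S c₀`: the connected component of the cell `c₀` in the
complement of the subcomplex `S` is a twice-punctured sphere with one funnel and
one fake-puncture.  Rendered combinatorially: the component contains infinitely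
many `4g`-gons (the funnel); there is a boundary cycle `δ` of `S` adjacent to the
component, it is unique (one fake-puncture), and every closed walk inside the
closure of the component is freely homotopic there to a power of `δ` or of its
inverse (so the closure is a half-open annulus bounded by `δ`). -/
def FunnelComponent {g : ℕ} (Y : Complex g) (S : SubC Y) (c₀ : Y.Cell) : Prop :=
  {f : Y.F | Y.reachS S c₀ (Y.fCell f)}.Infinite ∧
  ∃ δ : List Y.D, Y.BCycle S.sE S.sF δ ∧
    (∃ d ∈ δ, ∃ c', Y.incid (Y.eCell d.1) c' ∧ Y.reachS S c₀ c') ∧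
    (∀ δ', Y.BCycle S.sE S.sF δ' →
      (∃ d ∈ δ', ∃ c', Y.incid (Y.eCell d.1) c' ∧ Y.reachS S c₀ c') →
      ∃ n, δ' = δ.rotate n) ∧
    (∀ (v : Y.V) (l : List Y.D), Y.WalkFrom v v l →
      Y.InSet ({e | Y.reachS S c₀ (Y.eCell e)} ∪ {e | ∃ b, (e, b) ∈ δ}) l →
      ∃ n,
        Y.FreelyHomotopic ({e | Y.reachS S c₀ (Y.eCell e)} ∪ {e | ∃ b, (e, b) ∈ δ})
          {f | Y.reachS S c₀ (Y.fCell f)} l ((List.replicate n δ).flatten) ∨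
        Y.FreelyHomotopic ({e | Y.reachS S c₀ (Y.eCell e)} ∪ {e | ∃ b, (e, b) ∈ δ})
          {f | Y.reachS S c₀ (Y.fCell f)} l ((List.replicate n (Y.revW δ)).flatten))

/-- `Y` contains a funnel: an essential cycle `δ` of `Y` cutting off an infinite
region of `Y` which is attached to the rest of `Y` only along `δ`, contains no
boundary of `Y`, and is a half-open annulus (every loop inside is freely homotopic
to a power of `δ`); i.e. an end of `Y` which is a puncture of the ambient covering. -/
def HasFunnel {g : ℕ} (Y : Complex g) : Prop :=
  ∃ (δ : List Y.D) (sE : Set Y.E) (sF : Set Y.F),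
    Y.IsCycle δ ∧ Y.Essential Set.univ Set.univ δ ∧
    (∀ d ∈ δ, d.1 ∉ sE) ∧ sE.Nonempty ∧ sF.Infinite ∧
    (∀ f ∈ sF, ∀ d ∈ Y.bdry f, d.1 ∈ sE ∨ ∃ b, (d.1, b) ∈ δ) ∧
    (∀ f : Y.F, (∃ d ∈ Y.bdry f, d.1 ∈ sE) → f ∈ sF) ∧
    (∀ d : Y.D, d.1 ∈ sE → ¬ Y.IsBDart Set.univ Set.univ d) ∧
    (∀ v : Y.V, (∃ e ∈ sE, Y.src e = v ∨ Y.dst e = v) → (∀ d ∈ δ, Y.dTail d ≠ v) →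
      ∀ e' : Y.E, (Y.src e' = v ∨ Y.dst e' = v) → e' ∈ sE) ∧
    (∀ (v : Y.V) (l : List Y.D), Y.WalkFrom v v l →
      Y.InSet (sE ∪ {e | ∃ b, (e, b) ∈ δ}) l →
      ∃ n,
        Y.FreelyHomotopic (sE ∪ {e | ∃ b, (e, b) ∈ δ}) sF l
          ((List.replicate n δ).flatten) ∨
        Y.FreelyHomotopic (sE ∪ {e | ∃ b, (e, b) ∈ δ}) sF l
          ((List.replicate n (Y.revW δ)).flatten))

/-- The fundamental group of `Y` is cyclic: some closed walk `c` generates all free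
homotopy classes of loops.  (For a connected surface this is *equivalent to NOT
having genus ≥ 1 or at least 3 boundary components/punctures*.) -/
def CyclicPi1 {g : ℕ} (Y : Complex g) : Prop :=
  ∃ c : List Y.D, ∀ (v : Y.V) (l : List Y.D), Y.WalkFrom v v l →
    ∃ n,
      Y.FreelyHomotopic Set.univ Set.univ l ((List.replicate n c).flatten) ∨
      Y.FreelyHomotopic Set.univ Set.univ l ((List.replicate n (Y.revW c)).flatten)

/-! ### The covering space `J\~Σ_g` and the core surface of `J` -/

/-- Right cosets `Jx` of `J` in `Γ_g` — the vertices (and faces) of `J\~Σ_g`. -/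
abbrev Cos (g : ℕ) (J : Subgroup (Gamma g)) := Quotient (QuotientGroup.rightRel J)

/-- The coset `Jx`. -/
def mkCos (g : ℕ) (J : Subgroup (Gamma g)) (x : Gamma g) : Cos g J :=
  Quotient.mk _ x

/-- Right multiplication on right cosets. -/
def rmul (g : ℕ) (J : Subgroup (Gamma g)) (x : Gamma g) : Cos g J → Cos g J :=
  Quotient.map (· * x) (by
    intro a b hab
    have h1 : b * a⁻¹ ∈ J := QuotientGroup.rightRel_apply.mp hab
    refine QuotientGroup.rightRel_apply.mpr ?_
    have h2 : b * x * (a * x)⁻¹ = b * a⁻¹ := by group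
    rw [h2]; exact h1)

/-- The walk in `J\~Σ_g` starting at a vertex and reading a given word. -/
def relWalk (g : ℕ) (J : Subgroup (Gamma g)) :
    Cos g J → List (Letter g) → List ((Cos g J × Fin (2 * g)) × Bool)
  | _, [] => []
  | v, (ℓ, true) :: w =>
      ((v, ℓ), true) :: relWalk g J (rmul g J (PresentedGroup.of ℓ) v) w
  | v, (ℓ, false) :: w =>
      ((rmul g J (PresentedGroup.of ℓ)⁻¹ v, ℓ), false) ::
        relWalk g J (rmul g J (PresentedGroup.of ℓ)⁻¹ v) w

/-- The covering space `Υ = J\~Σ_g` of `Σ_g` corresponding to the subgroup `J`,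
with the CW-structure pulled back from `Σ_g`: vertices and `4g`-gons are the right
cosets of `J`, and each vertex carries one outgoing edge per label. -/
def cover (g : ℕ) (J : Subgroup (Gamma g)) : Complex g where
  V := Cos g J
  E := Cos g J × Fin (2 * g)
  F := Cos g J
  src e := e.1
  dst e := rmul g J (PresentedGroup.of e.2) e.1
  lab e := e.2
  bdry v := relWalk g J v (relatorWord g)

/-- The map `J₁\~Σ_g → J₂\~Σ_g` on vertices, for `J₁ ≤ J₂`. -/
def coverMapV {g : ℕ} {J₁ J₂ : Subgroup (Gamma g)} (h : J₁ ≤ J₂) :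
    Cos g J₁ → Cos g J₂ :=
  Quotient.map id (by
    intro a b hab
    have h1 : b * a⁻¹ ∈ J₁ := QuotientGroup.rightRel_apply.mp hab
    exact QuotientGroup.rightRel_apply.mpr (h h1))

/-- The natural covering morphism on edges. -/
def coverMapE {g : ℕ} {J₁ J₂ : Subgroup (Gamma g)} (h : J₁ ≤ J₂)
    (e : (cover g J₁).E) : (cover g J₂).E :=
  (coverMapV h e.1, e.2)

/-- The natural covering morphism on darts. -/
def coverMapD {g : ℕ} {J₁ J₂ : Subgroup (Gamma g)} (h : J₁ ≤ J₂)
    (d : (cover g J₁).D) : (cover g J₂).D :=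
  (coverMapE h d.1, d.2)

/-- The cycle `c` in `J\~Σ_g` represents the conjugacy class of `γ` in `J`
(conjugacy classes in `J` ↔ free homotopy classes of essential loops in `J\~Σ_g`). -/
def RepCls {g : ℕ} (J : Subgroup (Gamma g)) (c : List ((cover g J).D))
    (γ : Gamma g) : Prop :=
  ∃ x j : Gamma g, j ∈ J ∧
    (cover g J).WalkFrom (mkCos g J x) (mkCos g J x) c ∧
    x * wordG ((cover g J).wordOf c) * x⁻¹ = j * γ * j⁻¹

/-- Step (i) of the definition of the core surface: the edges lying on some
shortest representative cycle of an essential free homotopy class. -/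
def coreE1 (g : ℕ) (J : Subgroup (Gamma g)) : Set (cover g J).E :=
  {e | ∃ c, (cover g J).GoodCycle c ∧ ∃ b, (e, b) ∈ c}

/-- The vertices of step (i) of the definition of the core surface. -/
def coreV1 (g : ℕ) (J : Subgroup (Gamma g)) : Set (cover g J).V :=
  {v | ∃ e ∈ coreE1 g J, (cover g J).src e = v ∨ (cover g J).dst e = v}

/-- Step (i) of the definition of the core surface, as a subcomplex of `J\~Σ_g`. -/
def coreS1 (g : ℕ) (J : Subgroup (Gamma g)) : SubC (cover g J) :=
  ⟨coreV1 g J, coreE1 g J, ∅⟩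

/-- A cell of `J\~Σ_g` lying in a connected component of the complement of step (i)
which contains only finitely many `4g`-gons. -/
def coreFin (g : ℕ) (J : Subgroup (Gamma g)) (c : (cover g J).Cell) : Prop :=
  ¬ (cover g J).inSub (coreS1 g J) c ∧
  {f : (cover g J).F | (cover g J).reachS (coreS1 g J) c ((cover g J).fCell f)}.Finite

open Classical in
/-- The core surface `Core(J)` of a subgroup `J ≤ Γ_g`, as a subcomplex of
`Υ = J\~Σ_g`: (i) the union of all shortest representative cycles of essential
free homotopy classes in `Υ`, together with (ii) all connected components of the
complement containing finitely many `4g`-gons.  For the trivial subgroup it is a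
single vertex. -/
def coreSub (g : ℕ) (J : Subgroup (Gamma g)) : SubC (cover g J) :=
  if J = ⊥ then ⟨{mkCos g J 1}, ∅, ∅⟩
  else
    ⟨coreV1 g J ∪ {v | coreFin g J ((cover g J).vCell v)},
     coreE1 g J ∪ {e | coreFin g J ((cover g J).eCell e)},
     {f | coreFin g J ((cover g J).fCell f)}⟩

/-!
Call a walk shortenable if it is homotopic, relative to its endpoints, to a walk with at least two
edges fewer. A long block in a boundary reduced surface is not a boundary path, so some corner of
it is filled by a face; since the letters of a block determine one another, the whole block runs
along that face and may be replaced by the complementary arc, of length at most `2g - 1`.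

A long chain is not a boundary path either, so at some junction of consecutive blocks the skipped
half-edge belongs to a dart `e` of the surface. Inserting the spur `e ē` there splits the chain
into two chains with fewer blocks, each again a long chain or a single long block. Each of them
gains at least two edges and the spur costs only two, so by induction on the number of blocks long
chains are shortenable. A shortest cycle contains no shortenable walk, and its reversal is again
shortest.
-/

theorem exists_isPrefix_rotate_of_cycContains {α : Type*} {c s : List α}
    (h : cycContains c s) : ∃ n, s <+: c.rotate n := by
  obtain ⟨-, hlen, p, q, hpq⟩ := h
  refine ⟨p.length, List.prefix_iff_getElem.2 ⟨by simpa using hlen, fun i hi => ?_⟩⟩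
  have hsum : p.length + (s.length + q.length) = c.length + c.length := by
    simpa using congrArg List.length hpq
  have hs : s[i] = (c ++ c)[i + p.length]'(by simp; omega) := by
    simp only [← hpq]
    grind
  rw [hs, List.getElem_rotate]
  rcases Nat.lt_or_ge (i + p.length) c.length with hlt | hge
  · simp only [List.getElem_append_left hlt, Nat.mod_eq_of_lt hlt]
  · simp only [List.getElem_append_right hge, Nat.mod_eq_sub_mod hge,
      Nat.mod_eq_of_lt (show i + p.length - c.length < c.length by omega)]

theorem getElem_eq_of_isChain_of_biUnique {α : Type*} {R : α → α → Prop}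
    (hR : Relator.BiUnique R) {l : List α} (hl : l.IsChain R) {x : ℕ → α}
    (hx : ∀ n, R (x n) (x (n + 1))) {s i : ℕ} (hi : i < l.length) (h : l[i] = x (s + i))
    {k : ℕ} (hk : k < l.length) : l[k] = x (s + k) := by
  have iff_zero (j : ℕ) (hj : j < l.length) : l[j] = x (s + j) ↔ l[0] = x s := by
    induction j with
    | zero => rfl
    | succ j ih =>
      have hstep : R l[j] l[j + 1] := List.isChain_iff_getElem.1 hl j hj
      rw [← ih (by omega)]
      exact ⟨fun e => hR.1 (e ▸ hstep) (hx (s + j)), fun e => hR.2 (e ▸ hstep) (hx (s + j))⟩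
  exact (iff_zero k hk).2 ((iff_zero i hi).1 h)

/-! ### Half-edges around a vertex -/

/-- The inverse of a signed letter, which is the letter read by the reversed dart. The arrival
half-edge of a letter is the departure half-edge of its inverse. -/
def Letter.inv {g : ℕ} (s : Letter g) : Letter g := (s.1, !s.2)

section HalfEdges

variable {g : ℕ}

theorem Letter.inv_inv (s : Letter g) : s.inv.inv = s := by
  simp [Letter.inv]

theorem posArr_eq_posLv_inv (s : Letter g) : posArr s = posLv s.inv := by
  obtain ⟨ℓ, b⟩ := s
  cases b <;> rfl

theorem posLv_lt (s : Letter g) : posLv s < 4 * g := by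
  obtain ⟨ℓ, b⟩ := s
  have := ℓ.2
  cases b <;> simp only [posLv, posIn, posOut] <;> grind

theorem posArr_lt (s : Letter g) : posArr s < 4 * g :=
  posArr_eq_posLv_inv s ▸ posLv_lt s.inv

theorem posLv_injective : Function.Injective (posLv : Letter g → ℕ) := by
  rintro ⟨ℓ, b⟩ ⟨m, c⟩ h
  have := ℓ.2
  have := m.2
  have key : (ℓ : ℕ) = m ∧ b = c := by
    cases b <;> cases c <;> simp [posLv, posIn, posOut] at h ⊢ <;> split_ifs at h <;> omega
  exact Prod.ext (Fin.ext key.1) key.2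

theorem posArr_injective : Function.Injective (posArr : Letter g → ℕ) := by
  intro s t h
  rw [posArr_eq_posLv_inv, posArr_eq_posLv_inv] at h
  rw [← s.inv_inv, posLv_injective h, t.inv_inv]

theorem gapN_eq_iff (s t : Letter g) (k : ℕ) :
    gapN s t = k ↔ k < 4 * g ∧
      (posLv t = posArr s + 1 + k ∨ posLv t + 4 * g = posArr s + 1 + k) := by
  have hs := posArr_lt s
  have ht := posLv_lt t
  unfold gapN
  rcases lt_or_ge (posLv t + 4 * g - (posArr s + 1)) (4 * g) with h | h
  · rw [Nat.mod_eq_of_lt h]; omega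
  · rw [Nat.mod_eq_sub_mod h, Nat.mod_eq_of_lt (by omega)]; omega

theorem gapN_right_injective (s : Letter g) : Function.Injective (gapN s) := by
  intro t t' h
  have ht := (gapN_eq_iff s t _).1 h
  have ht' := (gapN_eq_iff s t' _).1 rfl
  have := posLv_lt t
  have := posLv_lt t'
  exact posLv_injective (by omega)

theorem gapN_left_injective (t : Letter g) : Function.Injective fun s => gapN s t := by
  intro s s' (h : gapN s t = gapN s' t)
  have hs := (gapN_eq_iff s t _).1 h
  have hs' := (gapN_eq_iff s' t _).1 rfl
  have := posArr_lt s
  have := posArr_lt s'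
  exact posArr_injective (by omega)

theorem gapN_eq_zero_iff_gapN_inv_eq_zero {s t : Letter g} (h : gapN s t = 1)
    (e : Letter g) : gapN s e = 0 ↔ gapN e.inv t = 0 := by
  rw [gapN_eq_iff] at h
  rw [gapN_eq_iff, gapN_eq_iff, posArr_eq_posLv_inv e.inv, e.inv_inv]
  have := posLv_lt e
  have := posLv_lt t
  have := posArr_lt s
  omega

theorem posLv_relator_letter (p : Fin (4 * g)) : posLv (relLabel g p, relSign g p) =
    if (p : ℕ) % 4 = 1 then (p : ℕ) + 2 else if (p : ℕ) % 4 = 3 then (p : ℕ) - 2 else (p : ℕ) := by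
  have hlabel : (relLabel g p : ℕ) = 2 * ((p : ℕ) / 4) + ((p : ℕ) % 4) % 2 := rfl
  simp only [posLv, posIn, posOut, relSign, decide_eq_true_eq]
  split_ifs <;> omega

theorem posArr_relator_letter (p : Fin (4 * g)) : posArr (relLabel g p, relSign g p) =
    if (p : ℕ) % 4 = 0 then (p : ℕ) + 2 else if (p : ℕ) % 4 = 2 then (p : ℕ) - 2 else (p : ℕ) := by
  have hlabel : (relLabel g p : ℕ) = 2 * ((p : ℕ) / 4) + ((p : ℕ) % 4) % 2 := rfl
  simp only [posArr, posIn, posOut, relSign, decide_eq_true_eq]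
  split_ifs <;> omega

theorem gapN_relator_succ {p q : Fin (4 * g)} (h : (q : ℕ) = (p + 1) % (4 * g)) :
    gapN (relLabel g p, relSign g p) (relLabel g q, relSign g q) = 0 := by
  have hp := p.2
  have := q.2
  have hcyc : (q : ℕ) = p + 1 ∨ (q : ℕ) = 0 ∧ (p : ℕ) + 1 = 4 * g := by
    rcases Nat.lt_or_ge ((p : ℕ) + 1) (4 * g) with hlt | hge
    · exact .inl (h.trans (Nat.mod_eq_of_lt hlt))
    · have hlast : (p : ℕ) + 1 = 4 * g := by omega
      exact .inr ⟨by rw [h, hlast, Nat.mod_self], hlast⟩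
  rw [gapN_eq_iff, posLv_relator_letter, posArr_relator_letter]
  split_ifs <;> omega

theorem length_relatorWord : (relatorWord g).length = 4 * g := by
  simp [relatorWord]

end HalfEdges

namespace Complex

variable {g : ℕ} {Y : Complex g} {sE : Set Y.E} {sF : Set Y.F}

/-! ### Walks -/

theorem dRev_dRev (d : Y.D) : Y.dRev (Y.dRev d) = d := by
  simp [dRev]

theorem dHead_dRev (d : Y.D) : Y.dHead (Y.dRev d) = Y.dTail d := by
  rcases d with ⟨e, _ | _⟩ <;> rfl

theorem dTail_dRev (d : Y.D) : Y.dTail (Y.dRev d) = Y.dHead d := by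
  rcases d with ⟨e, _ | _⟩ <;> rfl

theorem dLet_dRev (d : Y.D) : Y.dLet (Y.dRev d) = (Y.dLet d).inv := rfl

theorem genus_pos (d : Y.D) : 0 < g := by
  have := (Y.lab d.1).2
  omega

theorem revW_cons (d : Y.D) (l : List Y.D) : Y.revW (d :: l) = Y.revW l ++ [Y.dRev d] := by
  simp [revW]

theorem revW_append (l l' : List Y.D) : Y.revW (l ++ l') = Y.revW l' ++ Y.revW l := by
  simp [revW]

theorem revW_revW (l : List Y.D) : Y.revW (Y.revW l) = l := by
  simp [revW, Function.comp_def, dRev_dRev]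

theorem length_revW (l : List Y.D) : (Y.revW l).length = l.length := by
  simp [revW]

theorem walkFrom_nil_iff {u v : Y.V} : Y.WalkFrom u v [] ↔ u = v :=
  ⟨fun h => by cases h; rfl, fun h => h ▸ .nil u⟩

theorem walkFrom_cons_iff {u v : Y.V} {d : Y.D} {l : List Y.D} :
    Y.WalkFrom u v (d :: l) ↔ u = Y.dTail d ∧ Y.WalkFrom (Y.dHead d) v l :=
  ⟨fun h => by cases h with | cons _ h => exact ⟨rfl, h⟩, fun ⟨hu, h⟩ => hu ▸ .cons d h⟩

/-- Walks from `u` to `v` inside the subcomplex with edge set `sE`: the walks between which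
`Homotopic` is meaningful. -/
def WalkIn (Y : Complex g) (sE : Set Y.E) (u v : Y.V) (l : List Y.D) : Prop :=
  Y.WalkFrom u v l ∧ Y.InSet sE l

theorem walkIn_nil {u v : Y.V} : Y.WalkIn sE u v [] ↔ u = v := by
  simp [WalkIn, walkFrom_nil_iff, InSet]

theorem walkIn_cons {u v : Y.V} {d : Y.D} {l : List Y.D} :
    Y.WalkIn sE u v (d :: l) ↔ u = Y.dTail d ∧ d.1 ∈ sE ∧ Y.WalkIn sE (Y.dHead d) v l := by
  simp only [WalkIn, walkFrom_cons_iff, InSet, List.forall_mem_cons]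
  tauto

theorem walkIn_append {u v : Y.V} {l l' : List Y.D} :
    Y.WalkIn sE u v (l ++ l') ↔ ∃ m, Y.WalkIn sE u m l ∧ Y.WalkIn sE m v l' := by
  induction l generalizing u with
  | nil => simp [walkIn_nil]
  | cons d l ih => simp [walkIn_cons, ih, and_assoc]

theorem walkIn_singleton {u v : Y.V} {d : Y.D} :
    Y.WalkIn sE u v [d] ↔ u = Y.dTail d ∧ d.1 ∈ sE ∧ Y.dHead d = v := by
  rw [walkIn_cons, walkIn_nil]

theorem WalkIn.nil (v : Y.V) : Y.WalkIn sE v v [] :=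
  walkIn_nil.2 rfl

theorem WalkIn.append {u m v : Y.V} {l l' : List Y.D} (h : Y.WalkIn sE u m l)
    (h' : Y.WalkIn sE m v l') : Y.WalkIn sE u v (l ++ l') :=
  walkIn_append.2 ⟨m, h, h'⟩

theorem WalkIn.revW {u v : Y.V} {l : List Y.D} (h : Y.WalkIn sE u v l) :
    Y.WalkIn sE v u (Y.revW l) := by
  induction l generalizing u with
  | nil => exact walkIn_nil.2 (walkIn_nil.1 h).symm
  | cons d l ih =>
    obtain ⟨rfl, hd, hl⟩ := walkIn_cons.1 h
    rw [revW_cons]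
    exact (ih hl).append (walkIn_singleton.2 ⟨(dTail_dRev d).symm, hd, dHead_dRev d⟩)

theorem WalkIn.start_unique {u u' v v' : Y.V} {l : List Y.D} (h : Y.WalkIn sE u v l)
    (h' : Y.WalkIn sE u' v' l) (hl : l ≠ []) : u = u' := by
  obtain ⟨d, l, rfl⟩ := List.exists_cons_of_ne_nil hl
  exact (walkIn_cons.1 h).1.trans (walkIn_cons.1 h').1.symm

theorem WalkIn.end_unique {u v v' : Y.V} {l : List Y.D} (h : Y.WalkIn sE u v l)
    (h' : Y.WalkIn sE u v' l) : v = v' := by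
  induction l generalizing u with
  | nil => exact (walkIn_nil.1 h).symm.trans (walkIn_nil.1 h')
  | cons d l ih => exact ih (walkIn_cons.1 h).2.2 (walkIn_cons.1 h').2.2

theorem WalkIn.isChain_adj {u v : Y.V} {l : List Y.D} (h : Y.WalkIn sE u v l) :
    List.IsChain Y.adj l := by
  induction l generalizing u with
  | nil => exact .nil
  | cons d l ih =>
    have hl := (walkIn_cons.1 h).2.2
    refine List.isChain_cons.2 ⟨?_, ih hl⟩
    rintro d' hd'
    rw [List.eq_cons_of_mem_head? hd'] at hl
    exact (walkIn_cons.1 hl).1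

theorem WalkIn.exists_rotate {v : Y.V} {c : List Y.D} (hc : Y.WalkIn sE v v c) (n : ℕ) :
    ∃ m, Y.WalkIn sE m m (c.rotate n) := by
  rw [← List.take_append_drop (n % c.length) c] at hc
  obtain ⟨m, htake, hdrop⟩ := walkIn_append.1 hc
  exact ⟨m, List.rotate_eq_drop_append_take_mod ▸ hdrop.append htake⟩

/-! ### Homotopy -/

section Homotopy

variable {u v m x y : Y.V} {a a' b b' : List Y.D}

theorem Homotopic.refl (a : List Y.D) : Y.Homotopic sE sF u v a a :=
  Relation.EqvGen.refl a

theorem Homotopic.symm (h : Y.Homotopic sE sF u v a b) : Y.Homotopic sE sF u v b a :=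
  Relation.EqvGen.symm _ _ h

theorem Homotopic.trans {c : List Y.D} (h : Y.Homotopic sE sF u v a b)
    (h' : Y.Homotopic sE sF u v b c) : Y.Homotopic sE sF u v a c :=
  Relation.EqvGen.trans _ _ _ h h'

theorem elemMove.homotopic (h : Y.elemMove sE sF a b) (ha : Y.WalkIn sE u v a)
    (hb : Y.WalkIn sE u v b) : Y.Homotopic sE sF u v a b :=
  Relation.EqvGen.rel _ _ ⟨ha.1, hb.1, ha.2, hb.2, .inl h⟩

theorem Homotopic.map (φ : List Y.D → List Y.D)
    (hwalk : ∀ l, Y.WalkIn sE u v l → Y.WalkIn sE x y (φ l))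
    (hmove : ∀ l l', Y.elemMove sE sF l l' → Y.elemMove sE sF (φ l) (φ l'))
    (h : Y.Homotopic sE sF u v a b) : Y.Homotopic sE sF x y (φ a) (φ b) := by
  induction h with
  | refl a => exact .refl _
  | symm a b _ ih => exact ih.symm
  | trans a b c _ _ ih ih' => exact ih.trans ih'
  | rel a b h =>
    obtain ⟨hwa, hwb, hsa, hsb, hab | hba⟩ := h
    · exact (hmove _ _ hab).homotopic (hwalk _ ⟨hwa, hsa⟩) (hwalk _ ⟨hwb, hsb⟩)
    · exact ((hmove _ _ hba).homotopic (hwalk _ ⟨hwb, hsb⟩) (hwalk _ ⟨hwa, hsa⟩)).symm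

theorem elemMove.append_append (p q : List Y.D) (h : Y.elemMove sE sF a b) :
    Y.elemMove sE sF (p ++ a ++ q) (p ++ b ++ q) := by
  rcases h with ⟨l₁, l₂, d, hd, rfl, rfl⟩ | ⟨l₁, l₂, b, hb, rfl, rfl⟩
  · exact .inl ⟨p ++ l₁, l₂ ++ q, d, hd, by simp, by simp⟩
  · exact .inr ⟨p ++ l₁, l₂ ++ q, b, hb, by simp, by simp⟩

theorem faceLoop.revW (h : Y.faceLoop sF b) : Y.faceLoop sF (Y.revW b) := by
  obtain ⟨f, hf, n, rfl | rfl⟩ := h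
  · exact ⟨f, hf, n, .inr rfl⟩
  · exact ⟨f, hf, n, .inl (revW_revW _)⟩

theorem elemMove.revW (h : Y.elemMove sE sF a b) :
    Y.elemMove sE sF (Y.revW a) (Y.revW b) := by
  rcases h with ⟨l₁, l₂, d, hd, rfl, rfl⟩ | ⟨l₁, l₂, b, hb, rfl, rfl⟩
  · refine .inl ⟨Y.revW l₂, Y.revW l₁, d, hd, revW_append _ _, ?_⟩
    simp [revW_append, revW_cons, dRev_dRev]
  · exact .inr ⟨Y.revW l₂, Y.revW l₁, Y.revW b, hb.revW, revW_append _ _, by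
      simp [revW_append]⟩

theorem Homotopic.append_append {p q : List Y.D} (h : Y.Homotopic sE sF u v a b)
    (hp : Y.WalkIn sE x u p) (hq : Y.WalkIn sE v y q) :
    Y.Homotopic sE sF x y (p ++ a ++ q) (p ++ b ++ q) :=
  h.map (p ++ · ++ q) (fun _ hl => (hp.append hl).append hq) fun _ _ => elemMove.append_append p q

theorem Homotopic.append_left {p : List Y.D} (h : Y.Homotopic sE sF u v a b)
    (hp : Y.WalkIn sE x u p) : Y.Homotopic sE sF x v (p ++ a) (p ++ b) := by
  simpa using h.append_append hp (.nil v)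

theorem Homotopic.append_right {q : List Y.D} (h : Y.Homotopic sE sF u v a b)
    (hq : Y.WalkIn sE v y q) : Y.Homotopic sE sF u y (a ++ q) (b ++ q) := by
  simpa using h.append_append (.nil u) hq

theorem Homotopic.append (h : Y.Homotopic sE sF u m a a') (h' : Y.Homotopic sE sF m v b b')
    (ha' : Y.WalkIn sE u m a') (hb : Y.WalkIn sE m v b) :
    Y.Homotopic sE sF u v (a ++ b) (a' ++ b') :=
  (h.append_right hb).trans (h'.append_left ha')

theorem Homotopic.revW (h : Y.Homotopic sE sF u v a b) :
    Y.Homotopic sE sF v u (Y.revW a) (Y.revW b) :=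
  h.map Y.revW (fun _ => WalkIn.revW) fun _ _ => elemMove.revW

theorem homotopic_append_spur (e : Y.D) (he : e.1 ∈ sE) (ha : Y.WalkIn sE u (Y.dTail e) a)
    (hb : Y.WalkIn sE (Y.dTail e) v b) :
    Y.Homotopic sE sF u v (a ++ b) (a ++ [e] ++ Y.dRev e :: b) := by
  have hmove : Y.elemMove sE sF (a ++ b) (a ++ [e] ++ Y.dRev e :: b) :=
    .inl ⟨a, b, e, he, rfl, by simp⟩
  refine hmove.homotopic (ha.append hb) ((ha.append (walkIn_singleton.2 ⟨rfl, he, rfl⟩)).append ?_)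
  exact walkIn_cons.2 ⟨(dTail_dRev e).symm, he, (dHead_dRev e).symm ▸ hb⟩

theorem homotopic_append_revW_nil (ha : Y.WalkIn sE u v a) :
    Y.Homotopic sE sF u u (a ++ Y.revW a) [] := by
  induction a generalizing u with
  | nil => exact .refl _
  | cons d a ih =>
    obtain ⟨rfl, hd, ha⟩ := walkIn_cons.1 ha
    have hinner := (ih ha).append_append (p := [d]) (q := [Y.dRev d])
      (walkIn_singleton.2 ⟨rfl, hd, rfl⟩)
      (walkIn_singleton.2 ⟨(dTail_dRev d).symm, hd, dHead_dRev d⟩)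
    have hspur := homotopic_append_spur (sF := sF) d hd (.nil (Y.dTail d)) (.nil (Y.dTail d))
    simpa [revW_cons] using hinner.trans hspur.symm

theorem homotopic_revW_of_rotate_bdry_eq {f : Y.F} (hf : f ∈ sF) {n : ℕ} {r : List Y.D}
    (h : (Y.bdry f).rotate n = b ++ r) (hb : Y.WalkIn sE u v b) (hr : Y.WalkIn sE v u r) :
    Y.Homotopic sE sF u v b (Y.revW r) := by
  have hmove : Y.elemMove sE sF [] (b ++ r) :=
    .inr ⟨[], [], b ++ r, ⟨f, hf, n, .inl h.symm⟩, rfl, by simp⟩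
  have hface := (hmove.homotopic (.nil u) (hb.append hr)).append_right hr.revW
  have hcancel := (homotopic_append_revW_nil (sF := sF) hr).append_left hb
  simp only [List.nil_append, List.append_nil, List.append_assoc] at hface hcancel
  exact hcancel.symm.trans hface.symm

end Homotopy

/-! ### Free homotopy -/

theorem FreelyHomotopic.trans {a b c : List Y.D} (h : Y.FreelyHomotopic sE sF a b)
    (h' : Y.FreelyHomotopic sE sF b c) (hb : b ≠ []) : Y.FreelyHomotopic sE sF a c := by
  obtain ⟨u, v, p, hau, hbv, hp, hpS, haS, hbS, hab⟩ := h
  obtain ⟨v', w, q, hbv', hcw, hq, hqS, -, hcS, hbc⟩ := h'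
  obtain rfl : v = v' := WalkIn.start_unique ⟨hbv, hbS⟩ ⟨hbv', hbS⟩ hb
  have hpIn : Y.WalkIn sE u v p := ⟨hp, hpS⟩
  have hpq : Y.WalkIn sE u w (p ++ q) := hpIn.append ⟨hq, hqS⟩
  refine ⟨u, w, p ++ q, hau, hcw, hpq.1, hpq.2, haS, hcS, ?_⟩
  simpa [revW_append] using hab.trans (hbc.append_append hpIn hpIn.revW)

theorem FreelyHomotopic.revW {a b : List Y.D} (h : Y.FreelyHomotopic sE sF a b) :
    Y.FreelyHomotopic sE sF (Y.revW a) (Y.revW b) := by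
  obtain ⟨u, v, q, ha, hb, hq, hqS, haS, hbS, hab⟩ := h
  have ha' := WalkIn.revW ⟨ha, haS⟩
  have hb' := WalkIn.revW ⟨hb, hbS⟩
  refine ⟨u, v, q, ha'.1, hb'.1, hq, hqS, ha'.2, hb'.2, ?_⟩
  simpa [revW_append, revW_revW] using hab.revW

theorem Homotopic.freelyHomotopic {v : Y.V} {a b : List Y.D} (h : Y.Homotopic sE sF v v a b)
    (ha : Y.WalkIn sE v v a) (hb : Y.WalkIn sE v v b) : Y.FreelyHomotopic sE sF a b := by
  have hnil := WalkIn.nil (sE := sE) v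
  refine ⟨v, v, [], ha.1, hb.1, hnil.1, hnil.2, ha.2, hb.2, ?_⟩
  simpa [Complex.revW] using h

theorem freelyHomotopic_rotate {v : Y.V} {c : List Y.D} (hc : Y.WalkIn sE v v c) (n : ℕ) :
    Y.FreelyHomotopic sE sF c (c.rotate n) := by
  rw [List.rotate_eq_drop_append_take_mod]
  set p := c.take (n % c.length)
  set q := c.drop (n % c.length)
  have hpq : p ++ q = c := List.take_append_drop _ c
  obtain ⟨m, hp, hq⟩ := walkIn_append.1 (hpq ▸ hc)
  have hqp := hq.append hp
  refine ⟨v, m, p, hc.1, hqp.1, hp.1, hp.2, hc.2, hqp.2, ?_⟩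
  rw [← hpq]
  have hcancel := (homotopic_append_revW_nil (sF := sF) hp).append_left (hp.append hq)
  simpa using hcancel.symm

theorem ShortestRep.revW {c : List Y.D} (h : Y.ShortestRep sE sF c) :
    Y.ShortestRep sE sF (Y.revW c) := by
  intro c' hc'
  have hle := h (Y.revW c') (by simpa only [revW_revW] using hc'.revW)
  rwa [length_revW] at hle ⊢

theorem exists_shortestRep {v : Y.V} {c : List Y.D} (hc : Y.WalkIn sE v v c) :
    ∃ c', Y.FreelyHomotopic sE sF c c' ∧ Y.ShortestRep sE sF c' := by
  classical
  have hex : ∃ n c', Y.FreelyHomotopic sE sF c c' ∧ c'.length = n :=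
    ⟨_, c, (Homotopic.refl c).freelyHomotopic hc hc, rfl⟩
  obtain ⟨c', hcc', hlen⟩ := Nat.find_spec hex
  refine ⟨c', hcc', fun c'' h => ?_⟩
  by_cases hnil : c' = []
  · simp [hnil]
  · exact hlen.trans_le (Nat.find_min' hex ⟨c'', hcc'.trans h hnil, rfl⟩)

/-! ### Blocks and faces -/

/-- `d'` follows `d` inside a block: no half-edge lies between them. This is the relation that
chains the darts in `IsBlock`. -/
def blockStep (Y : Complex g) (d d' : Y.D) : Prop :=
  Y.adj d d' ∧ gapN (Y.dLet d) (Y.dLet d') = 0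

theorem P1.eq_of_dTail_eq (hP1 : Y.P1) {d d' : Y.D} (h : Y.dTail d = Y.dTail d')
    (hlet : Y.dLet d = Y.dLet d') : d = d' := by
  obtain ⟨e, s⟩ := d
  obtain ⟨e', s'⟩ := d'
  obtain ⟨hlab, rfl⟩ : Y.lab e = Y.lab e' ∧ s = s' := Prod.ext_iff.1 hlet
  have he : e = e' := by
    cases s
    · exact hP1.2 e e' h hlab
    · exact hP1.1 e e' h hlab
  rw [he]

theorem P1.eq_of_dHead_eq (hP1 : Y.P1) {d d' : Y.D} (h : Y.dHead d = Y.dHead d')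
    (hlet : Y.dLet d = Y.dLet d') : d = d' := by
  rw [← dRev_dRev d, ← dRev_dRev d']
  congr 1
  refine hP1.eq_of_dTail_eq ?_ ?_
  · rwa [dTail_dRev, dTail_dRev]
  · rw [dLet_dRev, dLet_dRev, hlet]

theorem P1.biUnique_blockStep (hP1 : Y.P1) : Relator.BiUnique Y.blockStep := by
  constructor
  · rintro d d' e ⟨hadj, hgap⟩ ⟨hadj', hgap'⟩
    exact hP1.eq_of_dHead_eq (Eq.trans hadj hadj'.symm)
      (gapN_left_injective _ (hgap.trans hgap'.symm))
  · rintro d e e' ⟨hadj, hgap⟩ ⟨hadj', hgap'⟩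
    exact hP1.eq_of_dTail_eq (hadj.symm.trans hadj')
      (gapN_right_injective _ (hgap.trans hgap'.symm))

theorem P3.length_bdry (hP3 : Y.P3) (f : Y.F) : (Y.bdry f).length = 4 * g := by
  simpa [wordOf, length_relatorWord] using congrArg List.length (hP3.1 f).2

theorem P3.dLet_getElem_bdry (hP3 : Y.P3) (f : Y.F) {i : ℕ} (hi : i < (Y.bdry f).length)
    (hi' : i < 4 * g) : Y.dLet (Y.bdry f)[i] = (relLabel g ⟨i, hi'⟩, relSign g ⟨i, hi'⟩) := by
  have hword : (Y.wordOf (Y.bdry f))[i]? = (relatorWord g)[i]? := by rw [(hP3.1 f).2]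
  simpa [wordOf, relatorWord, hi, hi'] using hword

theorem P3.blockStep_getElem_mod (hP3 : Y.P3) (f : Y.F) (h : 0 < (Y.bdry f).length) (n : ℕ) :
    Y.blockStep ((Y.bdry f)[n % (Y.bdry f).length]'(Nat.mod_lt _ h))
      ((Y.bdry f)[(n + 1) % (Y.bdry f).length]'(Nat.mod_lt _ h)) := by
  have hlen := hP3.length_bdry f
  constructor
  · obtain ⟨v, hv⟩ := (hP3.1 f).1
    have hclosed : Y.WalkIn Set.univ v v (Y.bdry f) := ⟨hv, fun _ _ => Set.mem_univ _⟩
    obtain ⟨m, hrot⟩ := hclosed.exists_rotate n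
    have hadj := List.isChain_iff_getElem.1 hrot.isChain_adj 0 (by simp; omega)
    simpa only [List.getElem_rotate, Nat.zero_add, Nat.add_comm 1 n] using hadj
  · rw [hP3.dLet_getElem_bdry f _ (hlen ▸ Nat.mod_lt _ h),
      hP3.dLet_getElem_bdry f _ (hlen ▸ Nat.mod_lt _ h)]
    exact gapN_relator_succ (by simp [hlen])

theorem P3.exists_blockStep_mem_bdry (hP3 : Y.P3) {f : Y.F} {d : Y.D} (hd : d ∈ Y.bdry f) :
    ∃ e ∈ Y.bdry f, Y.blockStep d e := by
  obtain ⟨i, hi, rfl⟩ := List.mem_iff_getElem.1 hd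
  have hstep := hP3.blockStep_getElem_mod f (by omega) i
  simp only [Nat.mod_eq_of_lt hi] at hstep
  exact ⟨_, List.getElem_mem _, hstep⟩

theorem P3.exists_mem_bdry_blockStep (hP3 : Y.P3) {f : Y.F} {d : Y.D} (hd : d ∈ Y.bdry f) :
    ∃ e ∈ Y.bdry f, Y.blockStep e d := by
  obtain ⟨i, hi, rfl⟩ := List.mem_iff_getElem.1 hd
  have hstep := hP3.blockStep_getElem_mod f (by omega) (i + (Y.bdry f).length - 1)
  have hmod : (i + (Y.bdry f).length - 1 + 1) % (Y.bdry f).length = i := by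
    rw [Nat.sub_add_cancel (by omega), Nat.add_mod_right, Nat.mod_eq_of_lt hi]
  simp only [hmod] at hstep
  exact ⟨_, List.getElem_mem _, hstep⟩

theorem IsBlock.exists_isPrefix_rotate_bdry (hP1 : Y.P1) (hP3 : Y.P3) {b : List Y.D}
    (hb : Y.IsBlock b) {d : Y.D} (hd : d ∈ b) {f : Y.F} (hf : d ∈ Y.bdry f) :
    ∃ n, b <+: (Y.bdry f).rotate n := by
  obtain ⟨-, hlen, hchain⟩ := hb
  obtain ⟨i, hi, rfl⟩ := List.mem_iff_getElem.1 hd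
  obtain ⟨m, hm, hmi⟩ := List.mem_iff_getElem.1 hf
  have hL := hP3.length_bdry f
  set L := (Y.bdry f).length
  have hmod : (m + L - i + i) % L = m := by
    rw [Nat.sub_add_cancel (by omega), Nat.add_mod_right, Nat.mod_eq_of_lt hm]
  refine ⟨m + L - i, List.prefix_iff_getElem.2 ⟨by simp; omega, fun k hk => ?_⟩⟩
  rw [List.getElem_rotate]
  simp only [Nat.add_comm k]
  exact getElem_eq_of_isChain_of_biUnique (hP1.biUnique_blockStep) hchain
    (x := fun n => (Y.bdry f)[n % L]'(Nat.mod_lt _ (by omega)))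
    (hP3.blockStep_getElem_mod f (by omega)) hi (by simp only [hmod, hmi]) hk

theorem blockStep.nextD {d d' : Y.D} (h : Y.blockStep d d') (hd' : d'.1 ∈ sE) :
    Y.nextD sE d d' :=
  ⟨hd', h.1, fun _ _ _ => h.2 ▸ Nat.zero_le _⟩

theorem faceStep.exists_mem_bdry {d d' : Y.D} (h : Y.faceStep sF d d') :
    ∃ f ∈ sF, d ∈ Y.bdry f := by
  obtain ⟨f, hf, h⟩ := h
  exact ⟨f, hf, by simpa using h.subset List.mem_cons_self⟩

theorem IsBlock.exists_face_of_not_bPath (hP1 : Y.P1) (hP3 : Y.P3) {b : List Y.D}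
    (hb : Y.IsBlock b) (hbS : Y.InSet sE b) (h : ¬ Y.BPath sE sF b) :
    ∃ f ∈ sF, ∃ n, b <+: (Y.bdry f).rotate n := by
  have hchain : ¬ List.IsChain (Y.bStep sE sF) b := fun hc => h ⟨hb.1, hbS, hc⟩
  rw [List.isChain_iff_forall_rel_of_append_cons_cons] at hchain
  push Not at hchain
  obtain ⟨d, d', l, l', rfl, hnot⟩ := hchain
  have hstep : Y.blockStep d d' := List.isChain_iff_forall_rel_of_append_cons_cons.1 hb.2.2 rfl
  have hface : Y.faceStep sF d d' := by
    by_contra hno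
    exact hnot ⟨hbS d (by simp), hstep.nextD (hbS d' (by simp)), hno⟩
  obtain ⟨f, hf, hdf⟩ := hface.exists_mem_bdry
  exact ⟨f, hf, hb.exists_isPrefix_rotate_bdry hP1 hP3 (d := d) (by simp) hdf⟩

/-! ### Shortening walks -/

/-- Every walk of the subcomplex along `s` is homotopic, relative to its endpoints, to a walk
that is shorter by at least two edges. The gain of two is what pays for the spur inserted in
`Shortenable.of_spur`. -/
def Shortenable (Y : Complex g) (sE : Set Y.E) (sF : Set Y.F) (s : List Y.D) : Prop :=
  ∀ ⦃u v⦄, Y.WalkIn sE u v s →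
    ∃ w, Y.WalkIn sE u v w ∧ Y.Homotopic sE sF u v s w ∧ w.length + 2 ≤ s.length

theorem IsBlock.shortenable (hP1 : Y.P1) (hP3 : Y.P3)
    (hsub : ∀ f ∈ sF, Y.InSet sE (Y.bdry f)) (hbr : Y.BoundaryReduced sE sF)
    {b : List Y.D} (hb : Y.IsBlock b) (hlong : 2 * g + 1 ≤ b.length) :
    Y.Shortenable sE sF b := by
  intro u v hw
  have hnot : ¬ Y.BPath sE sF b := fun h => hbr.1 b h ⟨hb, hlong⟩
  obtain ⟨f, hf, n, r, hr⟩ := hb.exists_face_of_not_bPath hP1 hP3 hw.2 hnot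
  obtain ⟨v₀, hv₀⟩ := (hP3.1 f).1
  obtain ⟨m, hbdry⟩ := WalkIn.exists_rotate ⟨hv₀, hsub f hf⟩ n
  obtain ⟨k, hbk, hrk⟩ := walkIn_append.1 (hr ▸ hbdry)
  obtain rfl : m = u := hbk.start_unique hw hb.1
  obtain rfl : k = v := hbk.end_unique hw
  have hlen := congrArg List.length hr
  rw [List.length_append, List.length_rotate, hP3.length_bdry] at hlen
  refine ⟨Y.revW r, hrk.revW, homotopic_revW_of_rotate_bdry_eq hf hr.symm hw hrk, ?_⟩
  rw [length_revW]
  omega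

/-! ### Spurs at the junctions of a chain -/

/-- `e` is a dart of the subcomplex through the half-edge that is skipped between the consecutive
blocks `b` and `b'`, so that both `b ++ [e]` and `dRev e :: b'` continue the blocks. -/
def IsSpur (Y : Complex g) (sE : Set Y.E) (b b' : List Y.D) (e : Y.D) : Prop :=
  e.1 ∈ sE ∧ (∃ d ∈ b.getLast?, Y.blockStep d e) ∧ ∃ d' ∈ b'.head?, Y.blockStep (Y.dRev e) d'

theorem Shortenable.of_spur {p q : List Y.D} {e : Y.D} (he : e.1 ∈ sE)
    (hadj : ∃ d ∈ q.head?, Y.adj (Y.dRev e) d) (hp : Y.Shortenable sE sF (p ++ [e]))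
    (hq : Y.Shortenable sE sF (Y.dRev e :: q)) : Y.Shortenable sE sF (p ++ q) := by
  intro u v hw
  obtain ⟨m, hwp, hwq⟩ := walkIn_append.1 hw
  obtain rfl : m = Y.dTail e := by
    obtain ⟨d, hd, hed⟩ := hadj
    rw [List.eq_cons_of_mem_head? hd] at hwq
    exact (walkIn_cons.1 hwq).1.trans (hed.symm.trans (dHead_dRev e))
  have hwpe : Y.WalkIn sE u (Y.dHead e) (p ++ [e]) :=
    hwp.append (walkIn_singleton.2 ⟨rfl, he, rfl⟩)
  have hweq : Y.WalkIn sE (Y.dHead e) v (Y.dRev e :: q) :=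
    walkIn_cons.2 ⟨(dTail_dRev e).symm, he, (dHead_dRev e).symm ▸ hwq⟩
  obtain ⟨w, hw, hpw, hwlen⟩ := hp hwpe
  obtain ⟨w', hw', hqw', hwlen'⟩ := hq hweq
  refine ⟨w ++ w', hw.append hw',
    (homotopic_append_spur e he hwp hwq).trans (hpw.append hqw' hw hweq), ?_⟩
  simp only [List.length_append, List.length_cons, List.length_nil] at hwlen hwlen' ⊢
  omega

theorem blockStep_iff_blockStep_dRev {d d' : Y.D} (hadj : Y.adj d d')
    (hgap : gapN (Y.dLet d) (Y.dLet d') = 1) (e : Y.D) :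
    Y.blockStep d e ↔ Y.blockStep (Y.dRev e) d' := by
  have hadj' : Y.adj d e ↔ Y.adj (Y.dRev e) d' := by
    simp only [adj, dHead_dRev] at hadj ⊢
    rw [hadj, eq_comm]
  exact and_congr hadj' (gapN_eq_zero_iff_gapN_inv_eq_zero hgap (Y.dLet e))

theorem chainStep.isSpur_iff {b b' : List Y.D} (h : Y.chainStep b b') {e : Y.D} (he : e.1 ∈ sE) :
    Y.IsSpur sE b b' e ↔ ∃ d ∈ b.getLast?, Y.blockStep d e := by
  obtain ⟨d, d', hd, hd', hadj, hgap⟩ := h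
  simp [IsSpur, he, hd, hd', blockStep_iff_blockStep_dRev hadj hgap]

theorem chainStep.isSpur_dRev_iff {b b' : List Y.D} (h : Y.chainStep b b') {e : Y.D}
    (he : e.1 ∈ sE) : Y.IsSpur sE b b' (Y.dRev e) ↔ ∃ d' ∈ b'.head?, Y.blockStep e d' := by
  obtain ⟨d, d', hd, hd', hadj, hgap⟩ := h
  have heRev : (Y.dRev e).1 ∈ sE := he
  simp [IsSpur, heRev, hd, hd', blockStep_iff_blockStep_dRev hadj hgap, dRev_dRev]

theorem chainStep.exists_isSpur_of_getLast_mem_bdry (hP3 : Y.P3)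
    (hsub : ∀ f ∈ sF, Y.InSet sE (Y.bdry f)) {b b' : List Y.D} (h : Y.chainStep b b') {f : Y.F}
    (hf : f ∈ sF) {d : Y.D} (hd : d ∈ b.getLast?) (hdf : d ∈ Y.bdry f) :
    ∃ e, Y.IsSpur sE b b' e := by
  obtain ⟨e, hef, hde⟩ := hP3.exists_blockStep_mem_bdry hdf
  exact ⟨e, (h.isSpur_iff (hsub f hf e hef)).2 ⟨d, hd, hde⟩⟩

theorem chainStep.exists_isSpur_of_head_mem_bdry (hP3 : Y.P3)
    (hsub : ∀ f ∈ sF, Y.InSet sE (Y.bdry f)) {b b' : List Y.D} (h : Y.chainStep b b') {f : Y.F}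
    (hf : f ∈ sF) {d : Y.D} (hd : d ∈ b'.head?) (hdf : d ∈ Y.bdry f) :
    ∃ e, Y.IsSpur sE b b' e := by
  obtain ⟨e, hef, hed⟩ := hP3.exists_mem_bdry_blockStep hdf
  exact ⟨Y.dRev e, (h.isSpur_dRev_iff (hsub f hf e hef)).2 ⟨d, hd, hed⟩⟩

theorem chainStep.exists_isSpur_of_not_bStep (hP3 : Y.P3)
    (hsub : ∀ f ∈ sF, Y.InSet sE (Y.bdry f)) {b b' : List Y.D} (h : Y.chainStep b b')
    {d d' : Y.D} (hd : d ∈ b.getLast?) (hd' : d' ∈ b'.head?) (hdS : d.1 ∈ sE) (hdS' : d'.1 ∈ sE)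
    (hnot : ¬ Y.bStep sE sF d d') : ∃ e, Y.IsSpur sE b b' e := by
  by_cases hface : Y.faceStep sF d d'
  · obtain ⟨f, hf, hdf⟩ := hface.exists_mem_bdry
    exact h.exists_isSpur_of_getLast_mem_bdry hP3 hsub hf hd hdf
  have hnext : ¬ Y.nextD sE d d' := fun hnext => hnot ⟨hdS, hnext, hface⟩
  obtain ⟨hadj, hgap⟩ : Y.adj d d' ∧ gapN (Y.dLet d) (Y.dLet d') = 1 := by
    obtain ⟨x, x', hx, hx', hstep⟩ := h
    rwa [← Option.mem_unique hx hd, ← Option.mem_unique hx' hd']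
  simp only [nextD, hdS', hadj, hgap, true_and, not_forall, not_le] at hnext
  obtain ⟨e, he, hde, hlt⟩ := hnext
  exact ⟨e, (h.isSpur_iff he).2 ⟨d, hd, hde, by omega⟩⟩

theorem exists_isSpur_of_mem_of_not_bPath (hP1 : Y.P1) (hP3 : Y.P3)
    (hsub : ∀ f ∈ sF, Y.InSet sE (Y.bdry f)) {bs : List (List Y.D)}
    (hch : List.IsChain Y.chainStep bs) (h2 : 2 ≤ bs.length) {b : List Y.D} (hmem : b ∈ bs)
    (hb : Y.IsBlock b) (hbS : Y.InSet sE b) (hnot : ¬ Y.BPath sE sF b) :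
    ∃ xs c c' ys e, bs = xs ++ c :: c' :: ys ∧ Y.IsSpur sE c c' e := by
  obtain ⟨f, hf, n, hpre⟩ := hb.exists_face_of_not_bPath hP1 hP3 hbS hnot
  have hface : ∀ d ∈ b, d ∈ Y.bdry f := fun d hd => List.mem_rotate.1 (hpre.subset hd)
  obtain ⟨xs, ys, rfl⟩ := List.append_of_mem hmem
  have hsteps := List.isChain_iff_forall_rel_of_append_cons_cons.1 hch
  rcases ys with _ | ⟨b', ys⟩
  · obtain ⟨xs, b₀, rfl⟩ := List.eq_nil_or_concat xs |>.resolve_left (by rintro rfl; simp at h2)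
    have heq : xs.concat b₀ ++ [b] = xs ++ b₀ :: b :: [] := by simp
    have hstep := hsteps heq
    obtain ⟨-, d, -, hd, -⟩ := id hstep
    obtain ⟨e, he⟩ := hstep.exists_isSpur_of_head_mem_bdry hP3 hsub hf hd
      (hface d (List.mem_of_head? hd))
    exact ⟨xs, b₀, b, [], e, heq, he⟩
  · have hstep := hsteps rfl
    obtain ⟨d, -, hd, -⟩ := id hstep
    obtain ⟨e, he⟩ := hstep.exists_isSpur_of_getLast_mem_bdry hP3 hsub hf hd
      (hface d (List.mem_of_getLast? hd))
    exact ⟨xs, b, b', ys, e, rfl, he⟩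

theorem IsChain.exists_isSpur_of_not_bPath (hP1 : Y.P1) (hP3 : Y.P3)
    (hsub : ∀ f ∈ sF, Y.InSet sE (Y.bdry f)) {bs : List (List Y.D)} (hch : Y.IsChain bs)
    (h2 : 2 ≤ bs.length) (hbsS : Y.InSet sE bs.flatten) (hnot : ¬ Y.BPath sE sF bs.flatten) :
    ∃ xs b b' ys e, bs = xs ++ b :: b' :: ys ∧ Y.IsSpur sE b b' e := by
  obtain ⟨hne, hblock, hsteps⟩ := hch
  have hS : ∀ b ∈ bs, Y.InSet sE b := fun b hb d hd => hbsS d (List.mem_flatten_of_mem hb hd)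
  have hnil : [] ∉ bs := fun h => (hblock [] h).1 rfl
  by_cases hall : ∀ b ∈ bs, Y.BPath sE sF b
  · have hflat : bs.flatten ≠ [] := by
      obtain ⟨b, hb⟩ := List.exists_mem_of_ne_nil bs hne
      exact fun h => (hblock b hb).1 (List.flatten_eq_nil_iff.1 h b hb)
    have hchain : ¬ List.IsChain (Y.bStep sE sF) bs.flatten := fun h => hnot ⟨hflat, hbsS, h⟩
    rw [List.isChain_flatten hnil] at hchain
    replace hchain := fun h => hchain ⟨fun b hb => (hall b hb).2.2, h⟩
    rw [imp_false, List.isChain_iff_forall_rel_of_append_cons_cons] at hchain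
    push Not at hchain
    obtain ⟨b, b', xs, ys, rfl, d, hd, d', hd', hstep⟩ := hchain
    have hbb' := List.isChain_iff_forall_rel_of_append_cons_cons.1 hsteps rfl
    obtain ⟨e, he⟩ := hbb'.exists_isSpur_of_not_bStep hP3 hsub hd hd'
      (hS b (by simp) d (List.mem_of_getLast? hd)) (hS b' (by simp) d' (List.mem_of_head? hd'))
      hstep
    exact ⟨xs, b, b', ys, e, rfl, he⟩
  · push Not at hall
    obtain ⟨b, hb, hbnot⟩ := hall
    exact exists_isSpur_of_mem_of_not_bPath hP1 hP3 hsub hsteps h2 hb (hblock b hb) (hS b hb) hbnot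

theorem IsBlock.concat_isSpur {b b' : List Y.D} {e : Y.D} (hb : Y.IsBlock b)
    (hlt : b.length < 4 * g) (he : Y.IsSpur sE b b' e) : Y.IsBlock (b ++ [e]) := by
  obtain ⟨-, ⟨d, hd, hde⟩, -⟩ := he
  refine ⟨by simp, by simpa using hlt, List.isChain_append.2 ⟨hb.2.2, .singleton e, ?_⟩⟩
  rintro x hx y hy
  obtain rfl : x = d := Option.mem_unique hx hd
  obtain rfl : e = y := by simpa using hy
  exact hde

theorem IsBlock.cons_isSpur {b b' : List Y.D} {e : Y.D} (hb' : Y.IsBlock b')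
    (hlt : b'.length < 4 * g) (he : Y.IsSpur sE b b' e) : Y.IsBlock (Y.dRev e :: b') := by
  obtain ⟨-, -, d, hd, hed⟩ := he
  refine ⟨by simp, by simpa using hlt, List.isChain_cons.2 ⟨?_, hb'.2.2⟩⟩
  rintro x hx
  obtain rfl : x = d := Option.mem_unique hx hd
  exact hed

theorem IsChain.append_last {xs ys : List (List Y.D)} {b l : List Y.D}
    (h : Y.IsChain (xs ++ b :: ys)) (hbl : Y.IsBlock (b ++ l)) :
    Y.IsChain (xs ++ [b ++ l]) := by
  obtain ⟨-, hblock, hsteps⟩ := h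
  obtain ⟨hxs, -, hjoin⟩ := List.isChain_append.1 hsteps
  refine ⟨by simp, ?_, List.isChain_append.2 ⟨hxs, .singleton _, ?_⟩⟩
  · rintro x hx
    rcases List.mem_append.1 hx with hx | hx
    · exact hblock x (by simp [hx])
    · exact List.mem_singleton.1 hx ▸ hbl
  · rintro x hx y hy
    obtain rfl : b ++ l = y := by simpa using hy
    obtain ⟨d, d', hd, hd', hdd'⟩ := hjoin x hx b rfl
    exact ⟨d, d', hd, List.mem_head?_append_of_mem_head? hd', hdd'⟩

theorem IsChain.append_head {xs ys : List (List Y.D)} {b l : List Y.D}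
    (h : Y.IsChain (xs ++ b :: ys)) (hlb : Y.IsBlock (l ++ b)) :
    Y.IsChain ((l ++ b) :: ys) := by
  obtain ⟨-, hblock, hsteps⟩ := h
  obtain ⟨hjoin, hys⟩ := List.isChain_cons.1 (List.isChain_append.1 hsteps).2.1
  refine ⟨by simp, List.forall_mem_cons.2 ⟨hlb, fun y hy => hblock y (by simp [hy])⟩,
    List.isChain_cons.2 ⟨fun y hy => ?_, hys⟩⟩
  obtain ⟨d, d', hd, hd', hdd'⟩ := hjoin y hy
  exact ⟨d, d', List.mem_getLast?_append_of_mem_getLast? hd, hd', hdd'⟩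

/-! ### Long chains -/

/-- The block lengths `2g, 2g - 1, …, 2g - 1, 2g` of a long chain. A single entry counts as both
ends and reads `2g + 1`, the length of a long block; with this convention the pattern is preserved
when a chain is split at a junction and one edge is added on either side. -/
def IsLongPattern (g : ℕ) (ns : List ℕ) : Prop :=
  ∀ i (h : i < ns.length),
    ns[i] = 2 * g - 1 + (if i = 0 then 1 else 0) + (if i + 1 = ns.length then 1 else 0)

theorem IsChain.genus_pos {bs : List (List Y.D)} (h : Y.IsChain bs) : 0 < g := by
  obtain ⟨b, hb⟩ := List.exists_mem_of_ne_nil bs h.1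
  obtain ⟨d, -⟩ := List.exists_mem_of_ne_nil b (h.2.1 b hb).1
  exact Complex.genus_pos d

theorem IsLongChain.isLongPattern {bs : List (List Y.D)} (h : Y.IsLongChain bs) :
    IsLongPattern g (bs.map List.length) := by
  have hg := h.1.genus_pos
  obtain ⟨k, hk⟩ := h.2
  rw [hk]
  intro i hi
  grind

theorem IsLongPattern.exists_eq {ns : List ℕ} (hg : 0 < g) (h : IsLongPattern g ns)
    (h2 : 2 ≤ ns.length) :
    ∃ k, ns = 2 * g :: (List.replicate k (2 * g - 1) ++ [2 * g]) := by
  refine ⟨ns.length - 2, List.ext_getElem (by simp; omega) fun i hi _ => ?_⟩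
  rw [h i hi]
  grind

theorem IsLongPattern.le_of_mem {ns : List ℕ} (hg : 0 < g) (h : IsLongPattern g ns)
    (h2 : 2 ≤ ns.length) {n : ℕ} (hn : n ∈ ns) : n ≤ 2 * g := by
  obtain ⟨i, hi, rfl⟩ := List.mem_iff_getElem.1 hn
  rw [h i hi]
  grind

theorem IsLongPattern.append_last {g : ℕ} {ns ns' : List ℕ} {m m' : ℕ}
    (h : IsLongPattern g (ns ++ m :: m' :: ns')) : IsLongPattern g (ns ++ [m + 1]) := by
  intro i hi
  have := h i (by simp at hi ⊢; omega)
  grind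

theorem IsLongPattern.append_head {g : ℕ} {ns ns' : List ℕ} {m m' : ℕ}
    (h : IsLongPattern g (ns ++ m :: m' :: ns')) : IsLongPattern g ((m' + 1) :: ns') := by
  intro i hi
  have := h (ns.length + 1 + i) (by simp at hi ⊢; omega)
  grind

theorem IsChain.shortenable_of_isLongPattern (hP1 : Y.P1) (hP3 : Y.P3)
    (hsub : ∀ f ∈ sF, Y.InSet sE (Y.bdry f)) (hbr : Y.BoundaryReduced sE sF)
    {bs : List (List Y.D)} (hch : Y.IsChain bs) (hlen : IsLongPattern g (bs.map List.length)) :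
    Y.Shortenable sE sF bs.flatten := by
  have hg := hch.genus_pos
  induction hn : bs.length using Nat.strong_induction_on generalizing bs with
  | _ n ih =>
  rcases Nat.lt_or_ge bs.length 2 with h2 | h2
  · obtain ⟨b, rfl⟩ : ∃ b, bs = [b] :=
      List.length_eq_one_iff.1 (by have := List.length_pos_of_ne_nil hch.1; omega)
    have hb : b.length = 2 * g - 1 + 1 + 1 := by simpa using hlen 0 (by simp)
    simpa using (hch.2.1 b (by simp)).shortenable hP1 hP3 hsub hbr (by omega)
  intro u v hw
  have hlong : Y.IsLongChain bs := ⟨hch, hlen.exists_eq hg (by simpa using h2)⟩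
  obtain ⟨xs, b, b', ys, e, rfl, he⟩ :=
    hch.exists_isSpur_of_not_bPath hP1 hP3 hsub h2 hw.2 (hbr.2 bs hlong)
  have hlt : ∀ x ∈ xs ++ b :: b' :: ys, x.length < 4 * g := fun x hx =>
    (hlen.le_of_mem hg (by simpa using h2) (List.mem_map_of_mem hx)).trans_lt (by omega)
  have hb := (hch.2.1 b (by simp)).concat_isSpur (hlt b (by simp)) he
  have hb' := (hch.2.1 b' (by simp)).cons_isSpur (hlt b' (by simp)) he
  have hch' : Y.IsChain ((xs ++ [b]) ++ b' :: ys) := by simpa using hch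
  simp only [List.map_append, List.map_cons] at hlen
  simp only [List.length_append, List.length_cons] at hn
  have hleft := ih _ (by simp; omega) (hch.append_last hb) (by simpa using hlen.append_last) rfl
  have hright := ih _ (by simp; omega) (hch'.append_head (l := [Y.dRev e]) hb')
    (by simpa using hlen.append_head) rfl
  obtain ⟨heS, -, d, hd, hed⟩ := he
  have hglue : Y.Shortenable sE sF ((xs.flatten ++ b) ++ (b' ++ ys.flatten)) :=
    .of_spur heS ⟨d, List.mem_head?_append_of_mem_head? hd, hed.1⟩ (by simpa using hleft)
      (by simpa using hright)
  have hflat : (xs ++ b :: b' :: ys).flatten = (xs.flatten ++ b) ++ (b' ++ ys.flatten) := by simp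
  rw [hflat] at hw ⊢
  exact hglue hw

theorem IsLongChain.shortenable (hP1 : Y.P1) (hP3 : Y.P3)
    (hsub : ∀ f ∈ sF, Y.InSet sE (Y.bdry f)) (hbr : Y.BoundaryReduced sE sF)
    {bs : List (List Y.D)} (h : Y.IsLongChain bs) : Y.Shortenable sE sF bs.flatten :=
  h.1.shortenable_of_isLongPattern hP1 hP3 hsub hbr h.isLongPattern

/-! ### Shortest cycles -/

theorem ShortestRep.not_cycContains {v : Y.V} {c s : List Y.D} (h : Y.ShortestRep sE sF c)
    (hc : Y.WalkIn sE v v c) (hs : Y.Shortenable sE sF s) : ¬ cycContains c s := by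
  intro hcs
  obtain ⟨n, r, hr⟩ := exists_isPrefix_rotate_of_cycContains hcs
  obtain ⟨m, hrot⟩ := hc.exists_rotate n
  obtain ⟨k, hsIn, hrIn⟩ := walkIn_append.1 (hr ▸ hrot)
  obtain ⟨w, hwIn, hsw, hlen⟩ := hs hsIn
  have hfree : Y.FreelyHomotopic sE sF (c.rotate n) (w ++ r) :=
    hr ▸ (hsw.append_right hrIn).freelyHomotopic (hsIn.append hrIn) (hwIn.append hrIn)
  have hne : c.rotate n ≠ [] := hr ▸ List.append_ne_nil_of_left_ne_nil hcs.1 r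
  have hshort := h _ ((freelyHomotopic_rotate hc n).trans hfree hne)
  rw [← List.length_rotate (n := n), ← hr, List.length_append, List.length_append] at hshort
  omega

theorem ShortestRep.noLongBlockOrChainCyc (hP1 : Y.P1) (hP3 : Y.P3)
    (hsub : ∀ f ∈ sF, Y.InSet sE (Y.bdry f)) (hbr : Y.BoundaryReduced sE sF) {v : Y.V}
    {c : List Y.D} (h : Y.ShortestRep sE sF c) (hc : Y.WalkIn sE v v c) :
    Y.NoLongBlockOrChainCyc c := by
  constructor
  · exact fun s hcs hs => h.not_cycContains hc (hs.1.shortenable hP1 hP3 hsub hbr hs.2) hcs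
  · exact fun bs hbs => h.not_cycContains hc (hbs.shortenable hP1 hP3 hsub hbr)

end Complex

/-! ### Tiled surfaces -/

namespace Hom

variable {g : ℕ} {Y Z : Complex g} (φ : Hom Y Z)

theorem dTail_mD (d : Y.D) : Z.dTail (φ.mD d) = φ.mV (Y.dTail d) := by
  rcases d with ⟨e, _ | _⟩ <;> simp [mD, Complex.dTail, φ.hsrc, φ.hdst]

theorem dHead_mD (d : Y.D) : Z.dHead (φ.mD d) = φ.mV (Y.dHead d) := by
  rcases d with ⟨e, _ | _⟩ <;> simp [mD, Complex.dHead, φ.hsrc, φ.hdst]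

theorem wordOf_map_mD (l : List Y.D) : Z.wordOf (l.map φ.mD) = Y.wordOf l := by
  simp [Complex.wordOf, Complex.dLet, mD, φ.hlab]

theorem exists_walkFrom_of_map_mD (hV : Function.Injective φ.mV) {l : List Y.D} {u : Y.V} {w : Z.V}
    (h : Z.WalkFrom (φ.mV u) w (l.map φ.mD)) : ∃ v, φ.mV v = w ∧ Y.WalkFrom u v l := by
  induction l generalizing u with
  | nil => exact ⟨u, Complex.walkFrom_nil_iff.1 h, .nil u⟩
  | cons d l ih =>
    obtain ⟨hu, hl⟩ := Complex.walkFrom_cons_iff.1 h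
    obtain ⟨v, hv, hwalk⟩ := ih (dHead_mD φ d ▸ hl)
    exact ⟨v, hv, Complex.walkFrom_cons_iff.2 ⟨hV (hu.trans (dTail_mD φ d)), hwalk⟩⟩

theorem exists_walkFrom_self_of_map_mD (hV : Function.Injective φ.mV) {l : List Y.D} (hl : l ≠ [])
    {w : Z.V} (h : Z.WalkFrom w w (l.map φ.mD)) : ∃ v, Y.WalkFrom v v l := by
  obtain ⟨d, l, rfl⟩ := List.exists_cons_of_ne_nil hl
  obtain rfl : w = φ.mV (Y.dTail d) := (Complex.walkFrom_cons_iff.1 h).1.trans (dTail_mD φ d)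
  obtain ⟨v, hv, hwalk⟩ := φ.exists_walkFrom_of_map_mD hV h
  exact ⟨_, hV hv ▸ hwalk⟩

theorem p1 (hE : Function.Injective φ.mE) (hZ : Z.P1) : Y.P1 := by
  refine ⟨fun e e' hv hlab => hE (hZ.1 _ _ ?_ ?_), fun e e' hv hlab => hE (hZ.2 _ _ ?_ ?_)⟩
  · rw [φ.hsrc, φ.hsrc, hv]
  · rw [φ.hlab, φ.hlab, hlab]
  · rw [φ.hdst, φ.hdst, hv]
  · rw [φ.hlab, φ.hlab, hlab]

theorem p3 (hg : 0 < g) (hV : Function.Injective φ.mV) (hF : Function.Injective φ.mF)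
    (hZ : Z.P3) : Y.P3 := by
  refine ⟨fun f => ?_, fun f f' h => hF (hZ.2 (by rw [φ.hbdry, φ.hbdry, h]))⟩
  obtain ⟨⟨w, hw⟩, hword⟩ := hZ.1 (φ.mF f)
  rw [φ.hbdry] at hw hword
  have hY : Y.wordOf (Y.bdry f) = relatorWord g := (φ.wordOf_map_mD _).symm.trans hword
  refine ⟨φ.exists_walkFrom_self_of_map_mD hV (fun hnil => ?_) hw, hY⟩
  have hlen : (Y.bdry f).length = 4 * g := by
    simpa [Complex.wordOf, length_relatorWord] using congrArg List.length hY
  simp only [hnil, List.length_nil] at hlen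
  omega

end Hom

theorem statement_7_general {g : ℕ} {Y : Complex g} (hP1 : Y.P1) (hP3 : Y.P3) {sE : Set Y.E}
    {sF : Set Y.F} (hsub : ∀ f ∈ sF, Y.InSet sE (Y.bdry f)) (hbr : Y.BoundaryReduced sE sF)
    {c : List Y.D} {v : Y.V} (hc : Y.WalkFrom v v c) (hcS : Y.InSet sE c) :
    (∃ c', Y.FreelyHomotopic sE sF c c' ∧ Y.ShortestRep sE sF c') ∧
    (Y.ShortestRep sE sF c →
       Y.NoLongBlockOrChainCyc c ∧ Y.NoLongBlockOrChainCyc (Y.revW c)) := by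
  have hcIn : Y.WalkIn sE v v c := ⟨hc, hcS⟩
  exact ⟨Complex.exists_shortestRep hcIn, fun hs =>
    ⟨hs.noLongBlockOrChainCyc hP1 hP3 hsub hbr hcIn,
      hs.revW.noLongBlockOrChainCyc hP1 hP3 hsub hbr hcIn.revW⟩⟩

/-- Let `Y` be a boundary reduced tiled surface and `C` (= `c`)
a non-backtracking cycle in `Y^(1)`.  Then (1) the free homotopy class of `C` has
a shortest representative cycle in `Y^(1)`, and (2) if `C` is a shortest
representative of its free homotopy class, then neither `C` nor `C*` contains a
long block or a long chain. -/
theorem statement_7 (g : ℕ) (hg : 2 ≤ g) (Y : Complex g) (hY : Y.IsTiledSurface)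
    (hbr : Y.BoundaryReduced Set.univ Set.univ)
    (c : List Y.D) (hc : Y.IsCycle c) (hnb : Y.NonBacktrackingCyc c) :
    (∃ c', Y.FreelyHomotopic Set.univ Set.univ c c' ∧
       Y.ShortestRep Set.univ Set.univ c') ∧
    (Y.ShortestRep Set.univ Set.univ c →
       Y.NoLongBlockOrChainCyc c ∧ Y.NoLongBlockOrChainCyc (Y.revW c)) := by
  obtain ⟨Z, ⟨hP1, hP3, -⟩, φ, hV, hE, hF⟩ := hY
  obtain ⟨v, hv⟩ := hc.2
  exact statement_7_general (φ.p1 hE hP1) (φ.p3 (by omega) hV hF hP3)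
    (fun _ _ _ _ => Set.mem_univ _) hbr hv fun _ _ => Set.mem_univ _

end CS

end
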